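/- arXiv:2602.07965 — 8 statements merged into one kernel-verified Lean document; each statement's English description precedes it below -/
import Mathlib

section
/- Let M(t) = −t − v₁t² − v₁²t³ − (2v₁³ + v₂)t⁴ − (4v₁⁴ + 3v₁v₂)t⁵ ∈ R[[t]]. Then L(M(t)) ≡ −L(t) (mod t⁶); that is, M is the formal inverse [−1]_F(t) of the universal 2-typical formal group law modulo t⁶. -/
open Polynomial

/-- The coefficient ring `R = ℚ[v₁, v₂]`. -/
noncomputable abbrev Rv : Type := MvPolynomial (Fin 2) ℚ

noncomputable def v₁ : Rv := MvPolynomial.X 0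
noncomputable def v₂ : Rv := MvPolynomial.X 1

/-- The logarithm of the universal 2-typical formal group law (with Hazewinkel
generators `v₁`, `v₂`), truncated in degrees ≤ 5:
`L(t) = t + (v₁/2)·t² + (v₁³/4 + v₂/2)·t⁴`. -/
noncomputable def Ltrunc : Polynomial Rv :=
  X + C (MvPolynomial.C (1/2 : ℚ) * v₁) * X ^ 2
    + C (MvPolynomial.C (1/4 : ℚ) * v₁ ^ 3 + MvPolynomial.C (1/2 : ℚ) * v₂) * X ^ 4

/-- `M(t) = −t − v₁t² − v₁²t³ − (2v₁³ + v₂)t⁴ − (4v₁⁴ + 3v₁v₂)t⁵`. -/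
noncomputable def Mexp : Polynomial Rv :=
  -X - C v₁ * X ^ 2 - C (v₁ ^ 2) * X ^ 3
    - C (2 * v₁ ^ 3 + v₂) * X ^ 4
    - C (4 * v₁ ^ 4 + 3 * (v₁ * v₂)) * X ^ 5

theorem key_identity {S : Type*} [CommRing S] (a b q h t : S) (hq : 4 * q = 1) (hh : h = 2 * q) :
    ∃ Q : S,
      (-t - a * t ^ 2 - a ^ 2 * t ^ 3 - (2 * a ^ 3 + b) * t ^ 4
          - (4 * a ^ 4 + 3 * (a * b)) * t ^ 5)
        + h * a * (-t - a * t ^ 2 - a ^ 2 * t ^ 3 - (2 * a ^ 3 + b) * t ^ 4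
          - (4 * a ^ 4 + 3 * (a * b)) * t ^ 5) ^ 2
        + (q * a ^ 3 + h * b) * (-t - a * t ^ 2 - a ^ 2 * t ^ 3 - (2 * a ^ 3 + b) * t ^ 4
          - (4 * a ^ 4 + 3 * (a * b)) * t ^ 5) ^ 4
        + (t + h * a * t ^ 2 + (q * a ^ 3 + h * b) * t ^ 4) = t ^ 6 * Q := by
  subst hh
  obtain ⟨p, hp⟩ : ∃ p, p = 2 * a ^ 3 + b := ⟨_, rfl⟩
  obtain ⟨r, hr⟩ : ∃ r, r = 4 * a ^ 4 + 3 * (a * b) := ⟨_, rfl⟩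
  obtain ⟨B, hB⟩ : ∃ B, B = (2 * r + 2 * a * p + a ^ 4) + (2 * a * r + 2 * a ^ 2 * p) * t
      + (2 * a ^ 2 * r + p ^ 2) * t ^ 2 + 2 * p * r * t ^ 3 + r ^ 2 * t ^ 4 := ⟨_, rfl⟩
  obtain ⟨D, hD⟩ : ∃ D, D = 3 * a ^ 2 + (6 * a ^ 3 + 2 * b) * t + t ^ 2 * B := ⟨_, rfl⟩
  refine ⟨2 * q * a * B + (q * a ^ 3 + 2 * q * b) *
    (4 * a ^ 2 + 2 * D + 4 * a * t * D + t ^ 2 * D ^ 2), ?_⟩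
  rw [← hp, ← hr]
  have h2 : (-t - a * t ^ 2 - a ^ 2 * t ^ 3 - p * t ^ 4 - r * t ^ 5) ^ 2
      = t ^ 2 + 2 * a * t ^ 3 + t ^ 4 * D := by
    rw [hD, hB]
    linear_combination (2 * t ^ 5) * hp
  have h4 : (-t - a * t ^ 2 - a ^ 2 * t ^ 3 - p * t ^ 4 - r * t ^ 5) ^ 4
      = (t ^ 2 + 2 * a * t ^ 3 + t ^ 4 * D) ^ 2 := by
    rw [← h2]; ring
  rw [h4, h2]
  clear h2 h4 hB
  linear_combination (a * t ^ 2 + a ^ 2 * t ^ 3 + (2 * a ^ 3 + b) * t ^ 4 + (4 * a ^ 4 + 3 * (a * b)) * t ^ 5) * hq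
    - t ^ 4 * hp - t ^ 5 * hr + 2 * q * a * t ^ 4 * hD

/-- `L(M(t)) ≡ −L(t) (mod t⁶)`: `M` is the formal inverse `[−1]_F(t)` of the universal
2-typical formal group law modulo `t⁶`. -/
theorem stmt_1 : ∀ k ≤ 5, (Ltrunc.comp Mexp).coeff k = (-Ltrunc).coeff k := by
  intro k hk
  have hq : (4 : Rv[X]) * C (MvPolynomial.C (1/4 : ℚ)) = 1 := by
    have : (4 : Rv[X]) = C (MvPolynomial.C (4 : ℚ)) :=
      (map_ofNat ((C : Rv →+* Rv[X]).comp MvPolynomial.C) 4).symm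
    rw [this, ← C_mul, ← MvPolynomial.C_mul]
    norm_num
  have hh : (C (MvPolynomial.C (1/2 : ℚ)) : Rv[X]) = 2 * C (MvPolynomial.C (1/4 : ℚ)) := by
    have : (2 : Rv[X]) = C (MvPolynomial.C (2 : ℚ)) :=
      (map_ofNat ((C : Rv →+* Rv[X]).comp MvPolynomial.C) 2).symm
    rw [this, ← C_mul, ← MvPolynomial.C_mul]
    norm_num
  obtain ⟨Q, hQ⟩ := key_identity (C v₁ : Rv[X]) (C v₂) _ _ X hq hh
  have e : Ltrunc.comp Mexp = -Ltrunc + X ^ 6 * Q := by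
    rw [← hQ]
    simp only [Ltrunc, Mexp, add_comp, mul_comp, pow_comp, X_comp, C_comp, C_add, C_mul, C_pow,
      C_ofNat]
    ring
  rw [e, coeff_add, coeff_X_pow_mul', if_neg (by omega), add_zero]
end

section
/- For every n ≥ 1 and every integer i ≥ 2, in ℤ[x₁,…,xₙ] one has m_{(2,2,1^{i−2})} = σ₂·σᵢ − i·σ₁·σ_{i+1} + ((i² + i − 2)/2)·σ_{i+2}. (Note that (i² + i − 2)/2 = (i+2)(i−1)/2 is an integer.) -/
open MvPolynomial

/-- The monomial symmetric polynomial in `n` variables over `ℤ` associated with the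
multiset of (positive) parts `lam`: the sum of all distinct monomials whose multiset of
nonzero exponents equals `lam`. -/
noncomputable def mSym (n : ℕ) (lam : Multiset ℕ) : MvPolynomial (Fin n) ℤ :=
  ∑ f : Fin n → Fin (lam.sum + 1),
    if Multiset.map (fun i => (f i : ℕ)) (Finset.univ.filter fun i => (f i : ℕ) ≠ 0).val = lam
    then ∏ i, X i ^ (f i : ℕ) else 0

/-- The mSym theorem is proved by induction on the number of variables. `T10 n x a b` is the
recursively computed monomial symmetric function of shape `(2^b, 1^a)`. -/
def T10 {R : Type*} [CommRing R] : (n : ℕ) → (Fin n → R) → ℕ → ℕ → R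
  | 0, _, a, b => if a = 0 ∧ b = 0 then 1 else 0
  | n + 1, x, a, b => T10 n (Fin.tail x) a b
      + (if 1 ≤ a then x 0 * T10 n (Fin.tail x) (a - 1) b else 0)
      + (if 1 ≤ b then x 0 ^ 2 * T10 n (Fin.tail x) a (b - 1) else 0)

/-- Count condition. -/
def cnd10 {n : ℕ} (g : Fin n → ℕ) (a b : ℕ) : Prop :=
  (∀ i, g i ≤ 2) ∧ ∑ i, (if g i = 1 then 1 else 0) = a ∧ ∑ i, (if g i = 2 then 1 else 0) = b

lemma esymm10_zero {R : Type*} [CommRing R] (s : Multiset R) : s.esymm 0 = 1 := by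
  simp [Multiset.esymm]

lemma esymm10_cons {R : Type*} [CommRing R] (y : R) (s : Multiset R) (k : ℕ) :
    (y ::ₘ s).esymm (k + 1) = s.esymm (k + 1) + y * s.esymm k := by
  simp [Multiset.esymm, Multiset.powersetCard_cons, Multiset.sum_map_mul_left]

/-- Elementary symmetric functions of a finite family. -/
def E10 {R : Type*} [CommRing R] {n : ℕ} (x : Fin n → R) (k : ℕ) : R :=
  (Finset.univ.val.map x).esymm k

lemma E10_zero {R : Type*} [CommRing R] {n : ℕ} (x : Fin n → R) : E10 x 0 = 1 :=
  esymm10_zero _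

lemma E10_nil {R : Type*} [CommRing R] (x : Fin 0 → R) (k : ℕ) : E10 x (k + 1) = 0 := by
  simp only [E10, Finset.univ_eq_empty, Finset.empty_val, Multiset.map_zero, Multiset.esymm]
  rw [Multiset.powersetCard_eq_empty _ (by simp)]
  simp

lemma E10_succ {R : Type*} [CommRing R] {n : ℕ} (x : Fin (n + 1) → R) (k : ℕ) :
    E10 x (k + 1) = E10 (Fin.tail x) (k + 1) + x 0 * E10 (Fin.tail x) k := by
  have h : (Finset.univ.val.map x) = x 0 ::ₘ (Finset.univ.val.map (Fin.tail x)) := by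
    rw [Fin.univ_succ, Finset.cons_val, Multiset.map_cons, Finset.map_val, Multiset.map_map]
    rfl
  rw [E10, h, esymm10_cons]
  rfl

lemma T10_zero {R : Type*} [CommRing R] (n : ℕ) (x : Fin n → R) (a : ℕ) :
    T10 n x a 0 = E10 x a := by
  induction n generalizing a with
  | zero => cases a <;> simp [T10, E10_zero, E10_nil]
  | succ n ih =>
    cases a with
    | zero => simp [T10, ih, E10_zero]
    | succ a => simp [T10, ih, E10_succ]

lemma T10_one {R : Type*} [CommRing R] (n : ℕ) (x : Fin n → R) (a : ℕ) :
    T10 n x a 1 = E10 x 1 * E10 x (a + 1) - (a + 2) * E10 x (a + 2) := by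
  induction n generalizing a with
  | zero => simp [T10, E10_nil]
  | succ n ih =>
    have e1 := E10_succ x 0
    have e2 := E10_succ x a
    have e3 := E10_succ x (a + 1)
    simp only [zero_add, E10_zero] at e1
    rw [e1, e2, e3]
    cases a with
    | zero =>
      simp [T10, ih, T10_zero, E10_zero]
      ring
    | succ a =>
      simp [T10, ih, T10_zero]
      ring

lemma T10_two {R : Type*} [CommRing R] (n : ℕ) (x : Fin n → R) (a : ℕ) :
    2 * T10 n x a 2 = 2 * E10 x 2 * E10 x (a + 2)
      - 2 * (a + 2) * E10 x 1 * E10 x (a + 3)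
      + (a + 4) * (a + 1) * E10 x (a + 4) := by
  induction n generalizing a with
  | zero => simp [T10, E10_nil]
  | succ n ih =>
    have e1 := E10_succ x 0
    have e0 := E10_succ x 1
    have e2 := E10_succ x (a + 1)
    have e3 := E10_succ x (a + 2)
    have e4 := E10_succ x (a + 3)
    simp only [zero_add, E10_zero] at e1
    rw [e0, e1, e2, e3, e4]
    have h := ih (Fin.tail x) a
    cases a with
    | zero =>
      simp [T10, T10_one] at h ⊢
      linear_combination h
    | succ a =>
      have h' := ih (Fin.tail x) a
      simp [T10, T10_one] at h h' ⊢
      linear_combination h + x 0 * h'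

lemma cnd10_cons {n M : ℕ} (j : Fin M) (f : Fin n → Fin M) (a b : ℕ) :
    cnd10 (fun i => ((Fin.cons j f : Fin (n + 1) → Fin M) i : ℕ)) a b ↔
      (j : ℕ) ≤ 2 ∧ ∃ a' b', cnd10 (fun i => (f i : ℕ)) a' b' ∧
        a = (if (j : ℕ) = 1 then 1 else 0) + a' ∧ b = (if (j : ℕ) = 2 then 1 else 0) + b' := by
  unfold cnd10
  rw [Fin.sum_univ_succ, Fin.sum_univ_succ, Fin.forall_fin_succ]
  simp only [Fin.cons_zero, Fin.cons_succ]
  constructor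
  · rintro ⟨⟨h1, h2⟩, h3, h4⟩
    exact ⟨h1, _, _, ⟨h2, rfl, rfl⟩, h3.symm, h4.symm⟩
  · rintro ⟨h1, _, _, ⟨h2, rfl, rfl⟩, h3, h4⟩
    exact ⟨⟨h1, h2⟩, h3.symm, h4.symm⟩

lemma cnd10_cons0 {n N : ℕ} (f : Fin n → Fin (N + 3)) (a b : ℕ) (j : Fin (N + 3))
    (hj : (j : ℕ) = 0) :
    cnd10 (fun i => ((Fin.cons j f : Fin (n + 1) → Fin (N + 3)) i : ℕ)) a b ↔
      cnd10 (fun i => (f i : ℕ)) a b := by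
  rw [cnd10_cons, hj]
  simp

lemma cnd10_cons1 {n N : ℕ} (f : Fin n → Fin (N + 3)) (a b : ℕ) (j : Fin (N + 3))
    (hj : (j : ℕ) = 1) :
    cnd10 (fun i => ((Fin.cons j f : Fin (n + 1) → Fin (N + 3)) i : ℕ)) a b ↔
      1 ≤ a ∧ cnd10 (fun i => (f i : ℕ)) (a - 1) b := by
  rw [cnd10_cons, hj]
  constructor
  · rintro ⟨_, a', b', h, rfl, rfl⟩
    simpa using h
  · rintro ⟨h, h'⟩
    exact ⟨by simp, _, _, h', by simp; omega, by simp⟩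

lemma cnd10_cons2 {n N : ℕ} (f : Fin n → Fin (N + 3)) (a b : ℕ) (j : Fin (N + 3))
    (hj : (j : ℕ) = 2) :
    cnd10 (fun i => ((Fin.cons j f : Fin (n + 1) → Fin (N + 3)) i : ℕ)) a b ↔
      1 ≤ b ∧ cnd10 (fun i => (f i : ℕ)) a (b - 1) := by
  rw [cnd10_cons, hj]
  constructor
  · rintro ⟨_, a', b', h, rfl, rfl⟩
    simpa using h
  · rintro ⟨h, h'⟩
    exact ⟨by simp, _, _, h', by simp, by simp; omega⟩

open Classical in
lemma T10_sum {R : Type*} [CommRing R] (N n : ℕ) (x : Fin n → R) (a b : ℕ) :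
    ∑ f : Fin n → Fin (N + 3), (if cnd10 (fun i => (f i : ℕ)) a b
      then ∏ i, x i ^ (f i : ℕ) else 0) = T10 n x a b := by
  induction n generalizing a b with
  | zero => simp [T10, cnd10, eq_comm]
  | succ n ih =>
    have hprod : ∀ (j : Fin (N + 3)) (f : Fin n → Fin (N + 3)),
        ∏ i, x i ^ ((Fin.cons j f : Fin (n + 1) → Fin (N + 3)) i : ℕ)
          = x 0 ^ (j : ℕ) * ∏ i, Fin.tail x i ^ (f i : ℕ) := by
      intro j f
      rw [Fin.prod_univ_succ]
      simp [Fin.tail]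
    have h2 : ((Fin.succ (Fin.succ (0 : Fin (N + 1))) : Fin (N + 3)) : ℕ) = 2 := rfl
    have h1 : ((Fin.succ (0 : Fin (N + 2)) : Fin (N + 3)) : ℕ) = 1 := rfl
    have h0 : ((0 : Fin (N + 3)) : ℕ) = 0 := rfl
    rw [← (Fin.consEquiv (fun _ => Fin (N + 3))).sum_comp, Fintype.sum_prod_type,
      Fin.sum_univ_succ, Fin.sum_univ_succ, Fin.sum_univ_succ]
    rw [← add_assoc, ← add_assoc, T10]
    simp only [Fin.consEquiv_apply, hprod]
    rw [Finset.sum_eq_zero (s := (Finset.univ : Finset (Fin N))), add_zero]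
    · simp only [cnd10_cons0 _ _ _ _ h0, cnd10_cons1 _ _ _ _ h1, cnd10_cons2 _ _ _ _ h2, h0, h1, h2,
        ← ih, pow_zero, one_mul, pow_one]
      congr 1
      · congr 1
        split_ifs with ha
        · simp [ha, Finset.mul_sum]
        · simp [ha]
      · split_ifs with ha
        · simp [ha, Finset.mul_sum]
        · simp [ha]
    · intro j _
      refine Finset.sum_eq_zero fun f _ => ?_
      rw [if_neg]
      intro h
      have := h.1 0
      simp at this

lemma cnd10_iff {n : ℕ} (g : Fin n → ℕ) (k : ℕ) :
    Multiset.map g (Finset.univ.filter fun i => g i ≠ 0).val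
      = (2 ::ₘ 2 ::ₘ Multiset.replicate k 1) ↔ cnd10 g k 2 := by
  have hc : ∀ c, c ≠ 0 → Multiset.count c (Multiset.map g (Finset.univ.filter fun i => g i ≠ 0).val)
      = ∑ i, (if g i = c then 1 else 0) := by
    intro c hc
    rw [Multiset.count_map, ← Finset.filter_val, Finset.card_val, Finset.filter_filter,
      Finset.card_filter]
    refine Finset.sum_congr rfl fun i _ => ?_
    congr 1
    apply propext
    constructor
    · rintro ⟨_, h⟩; exact h.symm
    · rintro rfl; exact ⟨hc, rfl⟩
  constructor
  · intro h
    refine ⟨fun i => ?_, ?_, ?_⟩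
    · by_cases h0 : g i = 0
      · omega
      have : g i ∈ Multiset.map g (Finset.univ.filter fun i => g i ≠ 0).val :=
        Multiset.mem_map_of_mem g (by simpa using h0)
      rw [h] at this
      simp [Multiset.mem_replicate] at this
      omega
    · rw [← hc 1 (by simp), h]; simp [Multiset.count_cons]
    · rw [← hc 2 (by simp), h]; simp [Multiset.count_cons, Multiset.count_replicate]
  · rintro ⟨h0, h1, h2⟩
    ext c
    by_cases hc0 : c = 0
    · subst hc0
      rw [Multiset.count_eq_zero_of_notMem, Multiset.count_eq_zero_of_notMem]
      · simp [Multiset.mem_replicate]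
      · simp
    rw [hc c hc0]
    by_cases c1 : c = 1
    · subst c1; rw [h1]; simp [Multiset.count_cons]
    by_cases c2 : c = 2
    · subst c2; rw [h2]; simp [Multiset.count_cons, Multiset.count_replicate]
    rw [Finset.sum_eq_zero]
    · simp [Multiset.count_cons, Multiset.count_replicate, c2, Ne.symm c1]
    · intro i _
      have := h0 i
      rw [if_neg]; omega

theorem stmt_10 (n : ℕ) (hn : 1 ≤ n) (i : ℕ) (hi : 2 ≤ i) :
    mSym n (2 ::ₘ 2 ::ₘ Multiset.replicate (i - 2) 1)
      = esymm (Fin n) ℤ 2 * esymm (Fin n) ℤ (i) - C (((i : ℤ) : ℤ)) * esymm (Fin n) ℤ 1 * esymm (Fin n) ℤ (i + 1)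
        + C ((((i : ℤ)^2 + (i : ℤ) - 2) / 2 : ℤ)) * esymm (Fin n) ℤ (i + 2) := by
  classical
  obtain ⟨a, rfl⟩ := Nat.exists_eq_add_of_le' hi
  have hT : mSym n (2 ::ₘ 2 ::ₘ Multiset.replicate (a + 2 - 2) 1)
      = T10 n (X : Fin n → MvPolynomial (Fin n) ℤ) a 2 := by
    have key : ∀ M, M = a + 2 + 3 → (∑ f : Fin n → Fin M,
        if Multiset.map (fun i => (f i : ℕ)) (Finset.univ.filter fun i => (f i : ℕ) ≠ 0).val
          = (2 ::ₘ 2 ::ₘ Multiset.replicate a 1)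
        then ∏ i, (X i : MvPolynomial (Fin n) ℤ) ^ (f i : ℕ) else 0)
        = T10 n (X : Fin n → MvPolynomial (Fin n) ℤ) a 2 := by
      rintro M rfl
      rw [← T10_sum (a + 2)]
      refine Finset.sum_congr rfl fun f _ => ?_
      simp only [cnd10_iff (fun i => (f i : ℕ))]
    rw [Nat.add_sub_cancel]
    unfold mSym
    refine key _ ?_
    rw [Multiset.sum_cons, Multiset.sum_cons, Multiset.sum_replicate, smul_eq_mul]
    omega
  have hd : 2 * ((((a + 2 : ℕ) : ℤ)^2 + ((a + 2 : ℕ) : ℤ) - 2) / 2) = ((a : ℤ) + 4) * (a + 1) := by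
    have h2 : (2 : ℤ) ∣ (((a + 2 : ℕ) : ℤ)^2 + ((a + 2 : ℕ) : ℤ) - 2) := by
      have := Int.even_mul_succ_self ((a : ℤ) + 2)
      obtain ⟨r, hr⟩ := this
      refine ⟨r - 1, ?_⟩
      push_cast
      linarith
    rw [Int.mul_ediv_cancel' h2]
    push_cast
    ring
  have hd' := congrArg (C : ℤ → MvPolynomial (Fin n) ℤ) hd
  rw [hT]
  have h := T10_two n (X : Fin n → MvPolynomial (Fin n) ℤ) a
  simp only [E10, ← esymm_eq_multiset_esymm (Fin n) ℤ] at h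
  apply mul_left_cancel₀ (two_ne_zero : (2 : MvPolynomial (Fin n) ℤ) ≠ 0)
  rw [h]
  rw [C_mul, C_mul] at hd'
  generalize (C ((((a + 2 : ℕ) : ℤ)^2 + ((a + 2 : ℕ) : ℤ) - 2) / 2) : MvPolynomial (Fin n) ℤ) = D at *
  have e : (C ((a + 2 : ℕ) : ℤ) : MvPolynomial (Fin n) ℤ) = a + 2 := by simp
  have e2 : (C 2 : MvPolynomial (Fin n) ℤ) = 2 := by simp
  have e3 : (C ((a : ℤ) + 4) : MvPolynomial (Fin n) ℤ) = a + 4 := by simp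
  have e4 : (C ((a : ℤ) + 1) : MvPolynomial (Fin n) ℤ) = a + 1 := by simp
  rw [e2, e3, e4] at hd'
  rw [e]
  linear_combination (-esymm (Fin n) ℤ (a + 4)) * hd'
end

section
/- For every n ≥ 1 and every integer i ≥ 3, in ℤ[x₁,…,xₙ] one has m_{(2,2,2,1^{i−3})} = σ₃·σᵢ − (i−1)·σ₂·σ_{i+1} + ((i² − i − 2)/2)·σ₁·σ_{i+2} − ((i³ − 7i + 6)/6)·σ_{i+3}. (The coefficients (i² − i − 2)/2 and (i³ − 7i + 6)/6 = (i−1)(i−2)(i+3)/6 are integers.) -/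
open MvPolynomial

/-- Sum over exponent vectors bounded by `N` with multiset of nonzero exponents `lam`. -/
noncomputable def gSum {R : Type*} [CommRing R] (N n : ℕ) (x : Fin n → R) (lam : Multiset ℕ) : R :=
  ∑ f : Fin n → Fin N,
    if Multiset.map (fun i => (f i : ℕ)) (Finset.univ.filter fun i => (f i : ℕ) ≠ 0).val = lam
    then ∏ i, x i ^ (f i : ℕ) else 0

noncomputable def eSum {R : Type*} [CommRing R] (n : ℕ) (x : Fin n → R) (k : ℕ) : R :=
  (Multiset.map x Finset.univ.val).esymm k

lemma map_cons_exp {N n : ℕ} (v : Fin N) (f : Fin n → Fin N) :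
    Multiset.map (fun i => ((Fin.cons v f : Fin (n+1) → Fin N) i : ℕ))
      (Finset.univ.filter fun i => ((Fin.cons v f : Fin (n+1) → Fin N) i : ℕ) ≠ 0).val
    = if (v : ℕ) = 0 then
        Multiset.map (fun i => (f i : ℕ)) (Finset.univ.filter fun i => (f i : ℕ) ≠ 0).val
      else (v : ℕ) ::ₘ
        Multiset.map (fun i => (f i : ℕ)) (Finset.univ.filter fun i => (f i : ℕ) ≠ 0).val := by
  rw [Fin.univ_succ, Finset.filter_cons]
  split_ifs with h1 h2 h2
  · simp at h1; omega
  · simp [Finset.filter_map]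
  · simp [Finset.filter_map]
  · simp at h1; omega

lemma gSum_succ {R : Type*} [CommRing R] (N n : ℕ) (x : Fin (n+1) → R) (lam : Multiset ℕ) :
    gSum N (n+1) x lam = ∑ v ∈ Finset.range N, x 0 ^ v *
      (if v = 0 then gSum N n (fun i => x i.succ) lam else
        if v ∈ lam then gSum N n (fun i => x i.succ) (lam.erase v) else 0) := by
  rw [← Fin.sum_univ_eq_sum_range (fun v => x 0 ^ v *
      (if v = 0 then gSum N n (fun i => x i.succ) lam else
        if v ∈ lam then gSum N n (fun i => x i.succ) (lam.erase v) else 0))]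
  unfold gSum
  rw [← (Fin.consEquiv (fun _ => Fin N)).sum_comp, Fintype.sum_prod_type]
  refine Finset.sum_congr rfl fun v _ => ?_
  simp only [Fin.consEquiv_apply, map_cons_exp, Fin.prod_univ_succ, Fin.cons_zero, Fin.cons_succ]
  by_cases h0 : (v : ℕ) = 0
  · simp only [h0, if_true, Finset.mul_sum, mul_ite, mul_zero]
  · simp only [h0, if_false]
    by_cases hm : (v : ℕ) ∈ lam
    · simp only [hm, if_true, Finset.mul_sum, mul_ite, mul_zero]
      refine Finset.sum_congr rfl fun f _ => ?_
      congr 1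
      apply propext
      conv_lhs => rw [← Multiset.cons_erase hm]
      exact Multiset.cons_inj_right _
    · simp only [hm, if_false, mul_zero]
      refine Finset.sum_eq_zero fun f _ => if_neg ?_
      rintro rfl
      exact hm (Multiset.mem_cons_self _ _)

/-- The partition `2^a 1^b`. -/
def lamAB (a b : ℕ) : Multiset ℕ := Multiset.replicate a 2 + Multiset.replicate b 1

lemma lamAB_erase_one (a b : ℕ) : (lamAB a (b+1)).erase 1 = lamAB a b := by
  simp [lamAB, Multiset.replicate_succ]

lemma lamAB_erase_two (a b : ℕ) : (lamAB (a+1) b).erase 2 = lamAB a b := by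
  simp [lamAB, Multiset.replicate_succ]

lemma one_mem_lamAB (a b : ℕ) : 1 ∈ lamAB a b ↔ b ≠ 0 := by
  simp [lamAB, Multiset.mem_replicate]

lemma two_mem_lamAB (a b : ℕ) : 2 ∈ lamAB a b ↔ a ≠ 0 := by
  simp [lamAB, Multiset.mem_replicate]

lemma gSum_rec {R : Type*} [CommRing R] (K n : ℕ) (x : Fin (n+1) → R) (a b : ℕ) :
    gSum (K+3) (n+1) x (lamAB a b) = gSum (K+3) n (fun i => x i.succ) (lamAB a b)
      + x 0 * (if b = 0 then 0 else gSum (K+3) n (fun i => x i.succ) (lamAB a (b-1)))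
      + x 0 ^ 2 * (if a = 0 then 0 else gSum (K+3) n (fun i => x i.succ) (lamAB (a-1) b)) := by
  rw [gSum_succ, Finset.sum_range_succ', Finset.sum_range_succ', Finset.sum_range_succ',
    Finset.sum_eq_zero]
  · rcases a with _ | a <;> rcases b with _ | b <;>
      simp [one_mem_lamAB, two_mem_lamAB, lamAB_erase_one, lamAB_erase_two] <;> ring
  · intro v _
    have : v + 1 + 1 + 1 ∉ lamAB a b := by
      simp [lamAB, Multiset.mem_replicate]
    simp [this]

lemma gSum_zero {R : Type*} [CommRing R] (N : ℕ) (x : Fin 0 → R) (a b : ℕ) :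
    gSum N 0 x (lamAB a b) = if a = 0 ∧ b = 0 then 1 else 0 := by
  rcases a with _ | a <;> rcases b with _ | b <;>
    simp [gSum, lamAB, Multiset.replicate_succ, eq_comm]

lemma eSum_zero {R : Type*} [CommRing R] (n : ℕ) (x : Fin n → R) : eSum n x 0 = 1 := by
  simp [eSum, Multiset.esymm]

lemma eSum_nil {R : Type*} [CommRing R] (x : Fin 0 → R) (k : ℕ) : eSum 0 x (k+1) = 0 := by
  have : (Multiset.map x (Finset.univ : Finset (Fin 0)).val) = 0 := by simp
  rw [eSum, this, Multiset.esymm, Multiset.powersetCard_zero_right]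
  simp

lemma eSum_succ {R : Type*} [CommRing R] (n : ℕ) (x : Fin (n+1) → R) (k : ℕ) :
    eSum (n+1) x (k+1) = eSum n (fun i => x i.succ) (k+1) + x 0 * eSum n (fun i => x i.succ) k := by
  unfold eSum
  have h : Multiset.map x Finset.univ.val
      = x 0 ::ₘ Multiset.map (fun i : Fin n => x i.succ) Finset.univ.val := by
    rw [Fin.univ_succ, Finset.cons_val, Multiset.map_cons, Finset.map_val, Multiset.map_map]
    rfl
  rw [h, Multiset.esymm, Multiset.powersetCard_cons, Multiset.map_add, Multiset.sum_add,
    Multiset.map_map]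
  simp only [Function.comp_def, Multiset.prod_cons, Multiset.sum_map_mul_left, Multiset.esymm]

lemma main_id {R : Type*} [CommRing R] (K n : ℕ) : ∀ (x : Fin n → R),
    (∀ b, gSum (K+3) n x (lamAB 0 b) = eSum n x b) ∧
    (∀ b : ℕ, gSum (K+3) n x (lamAB 1 b) =
      eSum n x 1 * eSum n x (b+1) - (b+2) * eSum n x (b+2)) ∧
    (∀ b : ℕ, 2 * gSum (K+3) n x (lamAB 2 b) =
      2 * eSum n x 2 * eSum n x (b+2) - 2 * (b+2) * eSum n x 1 * eSum n x (b+3)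
        + (b+4) * (b+1) * eSum n x (b+4)) ∧
    (∀ b : ℕ, 6 * gSum (K+3) n x (lamAB 3 b) =
      6 * eSum n x 3 * eSum n x (b+3) - 6 * (b+2) * eSum n x 2 * eSum n x (b+4)
        + 3 * (b+4) * (b+1) * eSum n x 1 * eSum n x (b+5)
        - (b+2) * (b+1) * (b+6) * eSum n x (b+6)) := by
  induction n with
  | zero =>
    intro x
    refine ⟨?_, ?_, ?_, ?_⟩ <;> intro b
    · rcases b with _ | b <;> simp [gSum_zero, eSum_zero, eSum_nil]
    all_goals simp [gSum_zero, eSum_nil]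
  | succ n ih =>
    intro x
    obtain ⟨hA, hB, hC, hD⟩ := ih (fun i => x i.succ)
    refine ⟨?_, ?_, ?_, ?_⟩ <;> intro b <;> rw [gSum_rec] <;> rcases b with _ | b <;>
      simp only [eSum_succ, eSum_zero, if_true, Nat.add_eq_zero_iff, one_ne_zero, and_false,
        if_false, OfNat.ofNat_ne_zero, Nat.add_sub_cancel, Nat.reduceSub, zero_add, Nat.sub_self]
    · have := hA 0
      simp only [eSum_zero] at this
      linear_combination this
    · linear_combination hA (b+1) + x 0 * hA b
    · have h1 := hB 0
      have h2 := hA 0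
      simp only [eSum_zero, zero_add] at h1 h2
      linear_combination h1 + x 0 ^ 2 * h2
    · have h1 := hB (b+1)
      push_cast at h1 ⊢
      linear_combination h1 + x 0 * hB b + x 0 ^ 2 * hA (b+1)
    · have h1 := hC 0
      have h2 := hB 0
      simp only [zero_add] at h1 h2
      push_cast at h1 h2 ⊢
      linear_combination h1 + 2 * x 0 ^ 2 * h2
    · have h1 := hC (b+1)
      have h2 := hB (b+1)
      push_cast at h1 h2 ⊢
      linear_combination h1 + x 0 * hC b + 2 * x 0 ^ 2 * h2
    · have h1 := hD 0
      have h2 := hC 0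
      simp only [zero_add] at h1 h2
      push_cast at h1 h2 ⊢
      linear_combination h1 + 3 * x 0 ^ 2 * h2
    · have h1 := hD (b+1)
      have h2 := hC (b+1)
      push_cast at h1 h2 ⊢
      linear_combination h1 + x 0 * hD b + 3 * x 0 ^ 2 * h2

theorem stmt_12 (n : ℕ) (hn : 1 ≤ n) (i : ℕ) (hi : 3 ≤ i) :
    mSym n (2 ::ₘ 2 ::ₘ 2 ::ₘ Multiset.replicate (i - 3) 1)
      = esymm (Fin n) ℤ 3 * esymm (Fin n) ℤ (i) - C (((i : ℤ) - 1 : ℤ)) * esymm (Fin n) ℤ 2 * esymm (Fin n) ℤ (i + 1)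
        + C ((((i : ℤ)^2 - (i : ℤ) - 2) / 2 : ℤ)) * esymm (Fin n) ℤ 1 * esymm (Fin n) ℤ (i + 2)
        - C ((((i : ℤ)^3 - 7 * (i : ℤ) + 6) / 6 : ℤ)) * esymm (Fin n) ℤ (i + 3) := by
  obtain ⟨b, rfl⟩ : ∃ b, i = b + 3 := ⟨i - 3, by omega⟩
  have hl : (2 ::ₘ 2 ::ₘ 2 ::ₘ Multiset.replicate (b + 3 - 3) 1) = lamAB 3 b := by
    simp [lamAB, Multiset.replicate_succ]
  have hs : (lamAB 3 b).sum + 1 = (b + 4) + 3 := by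
    simp [lamAB]; omega
  have hm : mSym n (lamAB 3 b) = gSum ((b+4)+3) n X (lamAB 3 b) := by
    rw [← hs]; rfl
  have he : ∀ k, esymm (Fin n) ℤ k = eSum n X k := fun k => by
    rw [esymm_eq_multiset_esymm]; rfl
  have key := (main_id (R := MvPolynomial (Fin n) ℤ) (b+4) n X).2.2.2 b
  rw [hl, hm]
  simp only [he]
  have d2 : (2 : ℤ) ∣ ((b + 3 : ℕ) : ℤ)^2 - ((b + 3 : ℕ) : ℤ) - 2 := by
    apply Int.dvd_of_emod_eq_zero
    generalize ((b + 3 : ℕ) : ℤ) = z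
    have : z % 2 = 0 ∨ z % 2 = 1 := by omega
    rcases this with h | h <;> simp [Int.sub_emod, pow_two, Int.mul_emod, h]
  have d6 : (6 : ℤ) ∣ ((b + 3 : ℕ) : ℤ)^3 - 7 * ((b + 3 : ℕ) : ℤ) + 6 := by
    apply Int.dvd_of_emod_eq_zero
    generalize ((b + 3 : ℕ) : ℤ) = z
    have : z % 6 = 0 ∨ z % 6 = 1 ∨ z % 6 = 2 ∨ z % 6 = 3 ∨ z % 6 = 4 ∨ z % 6 = 5 := by omega
    rcases this with h | h | h | h | h | h <;>
      simp [Int.sub_emod, Int.add_emod, pow_succ, Int.mul_emod, h]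
  have c2 := congrArg (C (σ := Fin n)) (Int.mul_ediv_cancel' d2)
  have c6 := congrArg (C (σ := Fin n)) (Int.mul_ediv_cancel' d6)
  generalize (((b + 3 : ℕ) : ℤ)^2 - ((b + 3 : ℕ) : ℤ) - 2) / 2 = u at *
  generalize (((b + 3 : ℕ) : ℤ)^3 - 7 * ((b + 3 : ℕ) : ℤ) + 6) / 6 = w at *
  have h6 : (6 : MvPolynomial (Fin n) ℤ) ≠ 0 := by norm_num
  apply mul_left_cancel₀ h6
  simp only [map_mul, map_sub, map_add, map_pow, map_natCast, map_ofNat, map_one, Int.cast_natCast,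
    Nat.cast_add, Nat.cast_ofNat] at c2 c6 ⊢
  linear_combination key - 3 * eSum n X 1 * eSum n X (b+5) * c2 + eSum n X (b+6) * c6
end

section
/- For every n ≥ 1 and every integer i ≥ 2, in ℤ[x₁,…,xₙ] one has m_{(3,2,1^{i−2})} = σ₁·σ₂·σᵢ − 3·σ₃·σᵢ + (2i−2)·σ₂·σ_{i+1} − i·σ₁²·σ_{i+1} + (2i+1)·σ₁·σ_{i+2} − (i² + 2i − 3)·σ_{i+3}. -/
open MvPolynomial

/-- Generalised monomial symmetric sum. -/
noncomputable def genS {R : Type*} [CommRing R] (N n : ℕ) (x : Fin n → R) (lam : Multiset ℕ) : R :=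
  ∑ f : Fin n → Fin N,
    if Multiset.map (fun i => (f i : ℕ)) (Finset.univ.filter fun i => (f i : ℕ) ≠ 0).val = lam
    then ∏ i, x i ^ (f i : ℕ) else 0

/-- Elementary symmetric values. -/
noncomputable def genE {R : Type*} [CommRing R] (n : ℕ) (x : Fin n → R) (k : ℕ) : R :=
  ((Finset.univ : Finset (Fin n)).val.map x).esymm k

theorem genE_zero {R : Type*} [CommRing R] (n : ℕ) (x : Fin n → R) : genE n x 0 = 1 := by
  simp [genE, Multiset.esymm]

theorem univ_map_succ {α : Type*} (n : ℕ) (x : Fin (n + 1) → α) :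
    ((Finset.univ : Finset (Fin (n+1))).val.map x)
      = x 0 ::ₘ ((Finset.univ : Finset (Fin n)).val.map (fun i => x i.succ)) := by
  rw [Fin.univ_succ]
  simp [Function.comp_def]

theorem genE_succ {R : Type*} [CommRing R] (n : ℕ) (x : Fin (n + 1) → R) (k : ℕ) :
    genE (n + 1) x (k + 1)
      = genE n (fun i => x i.succ) (k + 1) + x 0 * genE n (fun i => x i.succ) k := by
  unfold genE
  rw [univ_map_succ]
  simp only [Multiset.esymm, Multiset.powersetCard_cons, Multiset.map_add, Multiset.sum_add,
    Multiset.map_map, Function.comp_def, Multiset.prod_cons, Multiset.sum_map_mul_left]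

theorem genE_nil {R : Type*} [CommRing R] (x : Fin 0 → R) (k : ℕ) :
    genE 0 x (k + 1) = 0 := by
  simp [genE, Multiset.esymm, Multiset.powersetCard_zero_right]

theorem filt_eq {N n : ℕ} (f : Fin n → Fin N) :
    Multiset.map (fun i => (f i : ℕ)) (Finset.univ.filter fun i => (f i : ℕ) ≠ 0).val
      = Multiset.filter (fun a => a ≠ 0) ((Finset.univ : Finset (Fin n)).val.map
          (fun i => (f i : ℕ))) := by
  rw [Multiset.filter_map]; rfl

theorem genS_succ {R : Type*} [CommRing R] (M n : ℕ) (x : Fin (n + 1) → R) (lam : Multiset ℕ) :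
    genS (M + 1) (n + 1) x lam = genS (M + 1) n (fun i => x i.succ) lam
      + ∑ a : Fin M, x 0 ^ ((a : ℕ) + 1) *
        if (a : ℕ) + 1 ∈ lam then genS (M + 1) n (fun i => x i.succ) (lam.erase ((a : ℕ) + 1))
        else 0 := by
  unfold genS
  simp only [filt_eq]
  rw [← (Fin.consEquiv (fun _ => Fin (M + 1))).sum_comp, Fintype.sum_prod_type, Fin.sum_univ_succ]
  congr 1
  · refine Finset.sum_congr rfl fun f _ => ?_
    rw [univ_map_succ, Fin.prod_univ_succ]
    simp [Fin.consEquiv]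
  · refine Finset.sum_congr rfl fun a _ => ?_
    by_cases h : (a : ℕ) + 1 ∈ lam
    · rw [if_pos h, Finset.mul_sum]
      refine Finset.sum_congr rfl fun f _ => ?_
      rw [univ_map_succ, Fin.prod_univ_succ]
      obtain ⟨t, rfl⟩ := Multiset.exists_cons_of_mem h
      have hc : (Multiset.filter (fun a => a ≠ 0) ((((a : ℕ) + 1)) ::ₘ
          ((Finset.univ : Finset (Fin n)).val.map (fun i => (f i : ℕ)))) = (a + 1 : ℕ) ::ₘ t)
          ↔ Multiset.filter (fun a => a ≠ 0)
            ((Finset.univ : Finset (Fin n)).val.map (fun i => (f i : ℕ))) = t := by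
        rw [Multiset.filter_cons_of_pos _ (by omega), Multiset.cons_inj_right]
      simp only [Fin.consEquiv, Equiv.coe_fn_mk, Fin.cons_zero, Fin.cons_succ, Fin.val_succ, hc,
        Multiset.erase_cons_head, mul_ite, mul_zero]
    · rw [if_neg h, mul_zero]
      refine Finset.sum_eq_zero fun f _ => ?_
      rw [univ_map_succ, if_neg]
      rintro rfl
      apply h
      simp [Fin.consEquiv]

theorem genS_nil {R : Type*} [CommRing R] (N : ℕ) (x : Fin 0 → R) (lam : Multiset ℕ) :
    genS N 0 x lam = if 0 = lam then 1 else 0 := by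
  simp [genS]

theorem genS_succ' {R : Type*} [CommRing R] (M n : ℕ) (x : Fin (n + 1) → R) (lam : Multiset ℕ)
    (h : ∀ a ∈ lam, a ≤ 3) :
    genS (M + 4) (n + 1) x lam = genS (M + 4) n (fun i => x i.succ) lam
      + (x 0 * if 1 ∈ lam then genS (M + 4) n (fun i => x i.succ) (lam.erase 1) else 0)
      + (x 0 ^ 2 * if 2 ∈ lam then genS (M + 4) n (fun i => x i.succ) (lam.erase 2) else 0)
      + (x 0 ^ 3 * if 3 ∈ lam then genS (M + 4) n (fun i => x i.succ) (lam.erase 3) else 0) := by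
  rw [genS_succ, Fin.sum_univ_succ, Fin.sum_univ_succ, Fin.sum_univ_succ, Finset.sum_eq_zero]
  · simp only [Fin.val_succ, Fin.val_zero, add_zero, zero_add, pow_one, Nat.reduceAdd, add_assoc]
  · intro a _
    rw [if_neg, mul_zero]
    intro h'
    have := h _ h'
    simp only [Fin.val_succ] at this
    omega

abbrev rr (j : ℕ) : Multiset ℕ := Multiset.replicate j 1

theorem key {R : Type*} [CommRing R] (M n : ℕ) : ∀ (x : Fin n → R) (j : ℕ),
    genS (M + 4) n x (rr j) = genE n x j ∧
    genS (M + 4) n x (2 ::ₘ rr j) = genE n x 1 * genE n x (j + 1) - (j + 2) * genE n x (j + 2) ∧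
    genS (M + 4) n x (3 ::ₘ rr j) = genE n x 1 ^ 2 * genE n x (j + 1)
      - 2 * genE n x 2 * genE n x (j + 1) - genE n x 1 * genE n x (j + 2)
      + (j + 3) * genE n x (j + 3) ∧
    genS (M + 4) n x (3 ::ₘ 2 ::ₘ rr j) = genE n x 1 * genE n x 2 * genE n x (j + 2)
      - 3 * genE n x 3 * genE n x (j + 2) + (2 * (j + 2) - 2) * genE n x 2 * genE n x (j + 3)
      - (j + 2) * genE n x 1 ^ 2 * genE n x (j + 3)
      + (2 * (j + 2) + 1) * genE n x 1 * genE n x (j + 4)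
      - ((j + 2) ^ 2 + 2 * (j + 2) - 3) * genE n x (j + 5) := by
  induction n with
  | zero =>
    intro x j
    refine ⟨?_, ?_, ?_, ?_⟩
    · cases j <;> simp [genS_nil, genE_nil, genE_zero, Multiset.replicate_succ]
    all_goals simp [genS_nil, genE_nil]
  | succ n ih =>
    intro x j
    have e1 : genE (n + 1) x 1 = _ := genE_succ n x 0
    have e2 : genE (n + 1) x 2 = _ := genE_succ n x 1
    have e3 : genE (n + 1) x 3 = _ := genE_succ n x 2
    have h0 := genE_zero n (fun i => x i.succ)
    have b0 : ∀ a ∈ rr j, a ≤ 3 := by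
      intro a ha; rw [Multiset.eq_of_mem_replicate ha]; norm_num
    have b2 : ∀ a ∈ 2 ::ₘ rr j, a ≤ 3 := by
      intro a ha; rcases Multiset.mem_cons.1 ha with rfl | h
      · norm_num
      · exact b0 a h
    have b3 : ∀ a ∈ 3 ::ₘ rr j, a ≤ 3 := by
      intro a ha; rcases Multiset.mem_cons.1 ha with rfl | h
      · norm_num
      · exact b0 a h
    have b32 : ∀ a ∈ 3 ::ₘ 2 ::ₘ rr j, a ≤ 3 := by
      intro a ha; rcases Multiset.mem_cons.1 ha with rfl | h
      · norm_num
      · exact b2 a h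
    have c : (3 ::ₘ 2 ::ₘ rr j).erase 2 = 3 ::ₘ rr j := by
      rw [Multiset.erase_cons_tail _ (by norm_num), Multiset.erase_cons_head]
    rw [genS_succ' _ _ _ _ b0, genS_succ' _ _ _ _ b2, genS_succ' _ _ _ _ b3,
      genS_succ' _ _ _ _ b32, c]
    obtain ⟨i1, i2, i3, i4⟩ := ih (fun i => x i.succ) j
    have n2 : (2 : ℕ) ∉ rr j := fun h => by have := Multiset.eq_of_mem_replicate h; omega
    have n3 : (3 : ℕ) ∉ rr j := fun h => by have := Multiset.eq_of_mem_replicate h; omega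
    rw [i1, i2, i3, i4]
    simp only [e1, e2, e3, genE_succ, h0, Multiset.mem_cons, n2, n3, Multiset.erase_cons_head, i1,
      i2, i3]
    cases j with
    | zero =>
      simp [rr, genE_zero] at *
      refine ⟨?_, ?_, ?_⟩ <;> (try simp only [i1, i2, i3]) <;> ring
    | succ j =>
      obtain ⟨k1, k2, k3, k4⟩ := ih (fun i => x i.succ) j
      have d1 : (rr (j + 1)).erase 1 = rr j := by
        simp [rr, Multiset.replicate_succ]
      have d2 : (2 ::ₘ rr (j + 1)).erase 1 = 2 ::ₘ rr j := by
        rw [Multiset.erase_cons_tail _ (by norm_num), d1]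
      have d3 : (3 ::ₘ rr (j + 1)).erase 1 = 3 ::ₘ rr j := by
        rw [Multiset.erase_cons_tail _ (by norm_num), d1]
      have d4 : (3 ::ₘ 2 ::ₘ rr (j + 1)).erase 1 = 3 ::ₘ 2 ::ₘ rr j := by
        rw [Multiset.erase_cons_tail _ (by norm_num), d2]
      have m1 : 1 ∈ rr (j + 1) := by simp [rr, Multiset.replicate_succ]
      rw [d1, d2, d3, d4, k1, k2, k3, k4]
      simp only [m1, genE_succ]
      norm_num
      refine ⟨?_, ?_, ?_⟩ <;> ring

theorem stmt_13 (n : ℕ) (hn : 1 ≤ n) (i : ℕ) (hi : 2 ≤ i) :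
    mSym n (3 ::ₘ 2 ::ₘ Multiset.replicate (i - 2) 1)
      = esymm (Fin n) ℤ 1 * esymm (Fin n) ℤ 2 * esymm (Fin n) ℤ (i) - C ((3 : ℤ)) * esymm (Fin n) ℤ 3 * esymm (Fin n) ℤ (i)
        + C ((2 * (i : ℤ) - 2 : ℤ)) * esymm (Fin n) ℤ 2 * esymm (Fin n) ℤ (i + 1) - C (((i : ℤ) : ℤ)) * esymm (Fin n) ℤ 1^2 * esymm (Fin n) ℤ (i + 1)
        + C ((2 * (i : ℤ) + 1 : ℤ)) * esymm (Fin n) ℤ 1 * esymm (Fin n) ℤ (i + 2)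
        - C (((i : ℤ)^2 + 2 * (i : ℤ) - 3 : ℤ)) * esymm (Fin n) ℤ (i + 3) := by
  obtain ⟨j, rfl⟩ : ∃ j, i = j + 2 := ⟨i - 2, by omega⟩
  have hE : ∀ k, esymm (Fin n) ℤ k = genE n X k := by
    intro k; rw [esymm_eq_multiset_esymm]; rfl
  have hS : mSym n (3 ::ₘ 2 ::ₘ Multiset.replicate (j + 2 - 2) 1)
      = genS ((j + 2) + 4) n X (3 ::ₘ 2 ::ₘ rr j) := by
    have hs : (3 ::ₘ 2 ::ₘ Multiset.replicate j 1 : Multiset ℕ).sum + 1 = (j + 2) + 4 := by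
      simp; omega
    show genS ((3 ::ₘ 2 ::ₘ Multiset.replicate j 1 : Multiset ℕ).sum + 1) n X
      (3 ::ₘ 2 ::ₘ Multiset.replicate j 1) = _
    rw [hs]
  rw [hS, (key (j + 2) n X j).2.2.2]
  simp only [hE]
  simp only [map_add, map_sub, map_mul, map_pow, map_natCast, map_ofNat, map_intCast, map_one,
    Nat.cast_add, Nat.cast_ofNat, Int.cast_natCast, C_1]
end

section
/- For every n ≥ 1 and every integer i ≥ 4, in ℤ[x₁,…,xₙ] one has m_{(2,2,2,2,1^{i−4})} = σ₄·σᵢ − (i−2)·σ₃·σ_{i+1} + ((i² − 3i)/2)·σ₂·σ_{i+2} − ((i³ − 3i² − 4i + 12)/6)·σ₁·σ_{i+3} + ((i⁴ − 2i³ − 13i² + 38i − 24)/24)·σ_{i+4}. (All displayed rational coefficients are integers for integer i.) -/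
open MvPolynomial

/-- Sum over disjoint pairs `S`, `T` of sizes `a`, `b` of `x_S ^ 2 * x_T`. -/
noncomputable def MM (n a b : ℕ) : MvPolynomial (Fin n) ℤ :=
  ∑ S ∈ Finset.powersetCard a (Finset.univ : Finset (Fin n)),
    ∑ T ∈ Finset.powersetCard b (Finset.univ \ S), (∏ i ∈ S, X i ^ 2) * ∏ i ∈ T, X i

lemma chooseZ (n k : ℕ) :
    ((n.choose (k+1) : ℕ) : ℤ) * (k + 1) = (n.choose k : ℤ) * ((n : ℤ) - k) := by
  rcases Nat.lt_or_ge n k with h | h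
  · simp [Nat.choose_eq_zero_of_lt h, Nat.choose_eq_zero_of_lt (Nat.lt_succ_of_lt h)]
  · have := Nat.choose_succ_right_eq n k
    rw [← Nat.cast_sub h]
    exact_mod_cast this

lemma esymm_prod (n p q : ℕ) (hpq : p ≤ q) :
    esymm (Fin n) ℤ p * esymm (Fin n) ℤ q
      = ∑ a ∈ Finset.range (p + 1),
          C (((p + q - 2 * a).choose (p - a) : ℕ) : ℤ) * MM n a (p + q - 2 * a) := by
  classical
  have h1 : ∀ a ∈ Finset.range (p + 1),
      C (((p + q - 2 * a).choose (p - a) : ℕ) : ℤ) * MM n a (p + q - 2 * a)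
      = ∑ S ∈ Finset.powersetCard a (Finset.univ : Finset (Fin n)),
        ∑ T ∈ Finset.powersetCard (p + q - 2 * a) (Finset.univ \ S),
        ∑ D ∈ Finset.powersetCard (p - a) T,
          ((∏ i ∈ S, X i ^ 2) * ∏ i ∈ T, X i : MvPolynomial (Fin n) ℤ) := by
    intro a ha
    rw [MM, Finset.mul_sum]
    refine Finset.sum_congr rfl fun S hS => ?_
    rw [Finset.mul_sum]
    refine Finset.sum_congr rfl fun T hT => ?_
    rw [Finset.sum_const, Finset.card_powersetCard, (Finset.mem_powersetCard.1 hT).2]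
    simp [nsmul_eq_mul]
  rw [Finset.sum_congr rfl h1, esymm, esymm, Finset.sum_mul_sum]
  simp only [Finset.sum_sigma']
  refine Finset.sum_bij'
    (fun z _ => ⟨(z.1 ∩ z.2).card, z.1 ∩ z.2, (z.1 \ z.2) ∪ (z.2 \ z.1), z.1 \ z.2⟩)
    (fun w _ => ⟨w.2.1 ∪ w.2.2.2, w.2.1 ∪ (w.2.2.1 \ w.2.2.2)⟩) ?_ ?_ ?_ ?_ ?_
  · rintro ⟨A, B⟩ h
    simp only [Finset.mem_sigma, Finset.mem_powersetCard, Finset.mem_range] at h ⊢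
    obtain ⟨⟨-, hA⟩, -, hB⟩ := h
    have e1 := Finset.card_sdiff_add_card_inter A B
    have e2 := Finset.card_sdiff_add_card_inter B A
    rw [Finset.inter_comm B A] at e2
    have e3 : ((A \ B) ∪ (B \ A)).card = (A \ B).card + (B \ A).card :=
      Finset.card_union_of_disjoint (by
        rw [Finset.disjoint_left]; intro x; simp; tauto)
    refine ⟨by omega, ⟨Finset.subset_univ _, trivial⟩, ⟨?_, by omega⟩,
      Finset.subset_union_left, by omega⟩
    intro x; simp; tauto
  · rintro ⟨a, S, T, D⟩ h
    simp only [Finset.mem_sigma, Finset.mem_powersetCard, Finset.mem_range] at h ⊢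
    obtain ⟨ha, ⟨-, hS⟩, ⟨hT, hT'⟩, hD, hD'⟩ := h
    have d1 : Disjoint S T := by
      rw [Finset.disjoint_left]; intro x hx hx'
      have := hT hx'
      simp at this; exact this hx
    have d2 : Disjoint S D := d1.mono_right hD
    have d3 : Disjoint S (T \ D) := d1.mono_right Finset.sdiff_subset
    have := Finset.card_sdiff_add_card_eq_card hD
    refine ⟨⟨Finset.subset_univ _, ?_⟩, Finset.subset_univ _, ?_⟩
    · rw [Finset.card_union_of_disjoint d2]; omega
    · rw [Finset.card_union_of_disjoint d3]; omega
  · rintro ⟨A, B⟩ h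
    simp only
    congr 1
    · ext x; simp; tauto
    · congr 1; ext x; simp; tauto
  · rintro ⟨a, S, T, D⟩ h
    simp only [Finset.mem_sigma, Finset.mem_powersetCard, Finset.mem_range] at h
    obtain ⟨ha, ⟨-, hS⟩, ⟨hT, hT'⟩, hD, hD'⟩ := h
    have d1 : ∀ x, x ∈ T → x ∉ S := fun x hx => by simpa using hT hx
    have d2 : ∀ x, x ∈ D → x ∈ T := fun x hx => hD hx
    have i1 : (S ∪ D) ∩ (S ∪ (T \ D)) = S := by
      ext x; have := d1 x; have := d2 x; simp; try tauto
    have i2 : (S ∪ D) \ (S ∪ (T \ D)) = D := by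
      ext x; have := d1 x; have := d2 x; simp; try tauto
    have i3 : (S ∪ (T \ D)) \ (S ∪ D) = T \ D := by
      ext x; have := d1 x; have := d2 x; simp; try tauto
    have i4 : D ∪ T \ D = T := by
      ext x; have := d2 x; simp; try tauto
    simp only [i1, i2, i3, i4, hS]
  · rintro ⟨A, B⟩ h
    simp only
    have d : Disjoint (A \ B) (B \ A) := by
      rw [Finset.disjoint_left]; intro x; simp; tauto
    rw [Finset.prod_union d, Finset.prod_pow,
      ← Finset.prod_sdiff (Finset.inter_subset_left : A ∩ B ⊆ A),
      ← Finset.prod_sdiff (Finset.inter_subset_right : A ∩ B ⊆ B),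
      Finset.sdiff_inter_self_left, Finset.sdiff_inter_self_right]
    ring

lemma mSym_eq (n a b : ℕ) (lam : Multiset ℕ) (hs : 2 ≤ lam.sum)
    (hc : ∀ v, lam.count v = if v = 2 then a else if v = 1 then b else 0) :
    mSym n lam = MM n a b := by
  classical
  have key : ∀ f : Fin n → Fin (lam.sum + 1),
      (Multiset.map (fun i => (f i : ℕ)) (Finset.univ.filter fun i => (f i : ℕ) ≠ 0).val = lam)
      ↔ ((Finset.univ.filter fun i => (f i : ℕ) = 2).card = a ∧
         (Finset.univ.filter fun i => (f i : ℕ) = 1).card = b ∧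
         ∀ i, (f i : ℕ) = 0 ∨ (f i : ℕ) = 1 ∨ (f i : ℕ) = 2) := by
    intro f
    have cnt : ∀ v, (Multiset.map (fun i => (f i : ℕ))
        (Finset.univ.filter fun i => (f i : ℕ) ≠ 0).val).count v
        = if v = 0 then 0 else (Finset.univ.filter fun i => (f i : ℕ) = v).card := by
      intro v
      rw [Multiset.count_map, ← Finset.filter_val, Finset.card_val, Finset.filter_filter]
      split_ifs with h
      · rw [Finset.card_eq_zero, Finset.filter_eq_empty_iff]
        intro x _; omega
      · congr 1
        ext x; simp only [Finset.mem_filter, Finset.mem_univ, true_and]; omega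
    rw [Multiset.ext]
    simp only [cnt, hc]
    constructor
    · intro h
      refine ⟨by simpa using h 2, by simpa using h 1, fun i => ?_⟩
      by_contra! hcon
      have := h (f i)
      rw [if_neg hcon.1, if_neg hcon.2.2, if_neg hcon.2.1, Finset.card_eq_zero,
        Finset.filter_eq_empty_iff] at this
      exact this (Finset.mem_univ i) rfl
    · rintro ⟨h2, h1, h0⟩ v
      by_cases e2 : v = 2
      · subst e2; simpa using h2
      by_cases e1 : v = 1
      · subst e1; simpa using h1
      rw [if_neg e2, if_neg e1]
      split_ifs with e0
      · rfl
      · rw [Finset.card_eq_zero, Finset.filter_eq_empty_iff]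
        intro x _; have := h0 x; omega
  rw [mSym, ← Finset.sum_filter, MM, Finset.sum_sigma']
  refine Finset.sum_bij'
    (fun f _ => ⟨Finset.univ.filter fun i => (f i : ℕ) = 2,
      Finset.univ.filter fun i => (f i : ℕ) = 1⟩)
    (fun w _ => fun i => if i ∈ w.1 then ⟨2, by omega⟩ else if i ∈ w.2 then ⟨1, by omega⟩
      else ⟨0, by omega⟩) ?_ ?_ ?_ ?_ ?_
  · intro f hf
    rw [Finset.mem_filter, key] at hf
    obtain ⟨-, h2, h1, h0⟩ := hf
    simp only [Finset.mem_sigma, Finset.mem_powersetCard]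
    refine ⟨⟨Finset.subset_univ _, h2⟩, ?_, h1⟩
    intro x; simp; omega
  · rintro ⟨S, T⟩ h
    simp only [Finset.mem_sigma, Finset.mem_powersetCard] at h
    obtain ⟨⟨-, hS⟩, hT, hT'⟩ := h
    have d1 : ∀ x, x ∈ T → x ∉ S := fun x hx => by simpa using hT hx
    rw [Finset.mem_filter, key]
    refine ⟨Finset.mem_univ _, ?_, ?_, ?_⟩
    · rw [← hS]; congr 1; ext x
      simp only [Finset.mem_filter, Finset.mem_univ, true_and]
      split_ifs <;> simp_all
    · rw [← hT']; congr 1; ext x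
      have := d1 x
      simp only [Finset.mem_filter, Finset.mem_univ, true_and]
      split_ifs <;> simp_all <;> tauto
    · intro x
      simp only
      split_ifs <;> simp
  · intro f hf
    rw [Finset.mem_filter, key] at hf
    obtain ⟨-, h2, h1, h0⟩ := hf
    funext x
    apply Fin.ext
    have := h0 x
    simp only [Finset.mem_filter, Finset.mem_univ, true_and]
    split_ifs <;> simp <;> omega
  · rintro ⟨S, T⟩ h
    simp only [Finset.mem_sigma, Finset.mem_powersetCard] at h
    obtain ⟨⟨-, hS⟩, hT, hT'⟩ := h
    have d1 : ∀ x, x ∈ T → x ∉ S := fun x hx => by simpa using hT hx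
    simp only
    congr 1
    · ext x
      simp only [Finset.mem_filter, Finset.mem_univ, true_and]
      split_ifs <;> simp_all
    · ext x
      have := d1 x
      simp only [Finset.mem_filter, Finset.mem_univ, true_and]
      split_ifs <;> simp_all <;> tauto
  · intro f hf
    rw [Finset.mem_filter, key] at hf
    obtain ⟨-, h2, h1, h0⟩ := hf
    simp only
    rw [Finset.prod_filter, Finset.prod_filter, ← Finset.prod_mul_distrib]
    refine Finset.prod_congr rfl fun x _ => ?_
    rcases h0 x with h | h | h <;> simp [h]

theorem stmt_15 (n : ℕ) (hn : 1 ≤ n) (i : ℕ) (hi : 4 ≤ i) :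
    mSym n (2 ::ₘ 2 ::ₘ 2 ::ₘ 2 ::ₘ Multiset.replicate (i - 4) 1)
      = esymm (Fin n) ℤ 4 * esymm (Fin n) ℤ (i) - C (((i : ℤ) - 2 : ℤ)) * esymm (Fin n) ℤ 3 * esymm (Fin n) ℤ (i + 1)
        + C ((((i : ℤ)^2 - 3 * (i : ℤ)) / 2 : ℤ)) * esymm (Fin n) ℤ 2 * esymm (Fin n) ℤ (i + 2)
        - C ((((i : ℤ)^3 - 3 * (i : ℤ)^2 - 4 * (i : ℤ) + 12) / 6 : ℤ)) * esymm (Fin n) ℤ 1 * esymm (Fin n) ℤ (i + 3)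
        + C ((((i : ℤ)^4 - 2 * (i : ℤ)^3 - 13 * (i : ℤ)^2 + 38 * (i : ℤ) - 24) / 24 : ℤ)) * esymm (Fin n) ℤ (i + 4) := by
  obtain ⟨j, rfl⟩ := Nat.exists_eq_add_of_le' hi
  rw [mSym_eq n 4 j _ (by simp) (by
    intro v
    simp only [Multiset.count_cons, Multiset.count_replicate, Nat.add_sub_cancel]
    split_ifs <;> omega)]
  have P4 := esymm_prod n 4 (j + 4) (by omega)
  have P3 := esymm_prod n 3 (j + 4 + 1) (by omega)
  have P2 := esymm_prod n 2 (j + 4 + 2) (by omega)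
  have P1 := esymm_prod n 1 (j + 4 + 3) (by omega)
  have P0 := esymm_prod n 0 (j + 4 + 4) (by omega)
  simp only [Finset.sum_range_succ, Finset.sum_range_zero, zero_add] at P4 P3 P2 P1 P0
  have s0 : j + 8 - 2 * 0 = j + 8 := by omega
  have s1 : j + 8 - 2 * 1 = j + 6 := by omega
  have s2 : j + 8 - 2 * 2 = j + 4 := by omega
  have s3 : j + 8 - 2 * 3 = j + 2 := by omega
  have s4 : j + 8 - 2 * 4 = j := by omega
  have t4 : 4 + (j + 4) = j + 8 := by omega
  have t3 : 3 + (j + 4 + 1) = j + 8 := by omega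
  have t2 : 2 + (j + 4 + 2) = j + 8 := by omega
  have t1 : 1 + (j + 4 + 3) = j + 8 := by omega
  have t0 : j + 4 + 4 = j + 8 := by omega
  rw [esymm_zero, one_mul] at P0
  simp only [t4, s0, s1, s2, s3, s4] at P4
  simp only [t3, s0, s1, s2, s3, s4] at P3
  simp only [t2, s0, s1, s2, s3, s4] at P2
  simp only [t1, s0, s1, s2, s3, s4] at P1
  simp only [t0, s0] at P0
  norm_num at P4 P3 P2 P1 P0
  have a2 := chooseZ (j + 4) 1
  have b2 := chooseZ (j + 6) 1
  have b3 := chooseZ (j + 6) 2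
  have c2 := chooseZ (j + 8) 1
  have c3 := chooseZ (j + 8) 2
  have c4 := chooseZ (j + 8) 3
  norm_num at a2 b2 b3 c2 c3 c4
  set A2 : ℤ := (((j + 4).choose 2 : ℕ) : ℤ) with hA2
  set B2 : ℤ := (((j + 6).choose 2 : ℕ) : ℤ) with hB2
  set B3 : ℤ := (((j + 6).choose 3 : ℕ) : ℤ) with hB3
  set D2 : ℤ := (((j + 8).choose 2 : ℕ) : ℤ) with hD2
  set D3 : ℤ := (((j + 8).choose 3 : ℕ) : ℤ) with hD3
  set D4 : ℤ := (((j + 8).choose 4 : ℕ) : ℤ) with hD4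
  obtain ⟨Q2, hQ2⟩ : ∃ Q2 : ℤ, Q2 = (j + 2) * (j + 4) - A2 := ⟨_, rfl⟩
  obtain ⟨Q3, hQ3⟩ : ∃ Q3 : ℤ, Q3 = B3 - (j + 2) * B2 + Q2 * (j + 6) := ⟨_, rfl⟩
  obtain ⟨Q4, hQ4⟩ : ∃ Q4 : ℤ, Q4 = - D4 + (j + 2) * D3 - Q2 * D2 + Q3 * (j + 8) := ⟨_, rfl⟩
  have h2 : 2 * Q2 = (j + 4) * (j + 1) := by
    rw [hQ2]; linear_combination -a2
  have h3 : 6 * Q3 = ((j : ℤ) + 4)^3 - 3 * ((j : ℤ) + 4)^2 - 4 * ((j : ℤ) + 4) + 12 := by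
    rw [hQ3]
    linear_combination 2 * b3 + (j + 4) * b2 - 3 * (j + 2) * b2 + 3 * (j + 6) * h2
  have h4 : 24 * Q4 = ((j : ℤ) + 4)^4 - 2 * ((j : ℤ) + 4)^3 - 13 * ((j : ℤ) + 4)^2
      + 38 * ((j : ℤ) + 4) - 24 := by
    rw [hQ4]
    linear_combination -6 * c4 - 2 * (j + 5) * c3 - (j + 5) * (j + 6) * c2 + 8 * (j + 2) * c3
      + 4 * (j + 2) * (j + 6) * c2 - 12 * D2 * h2 - 6 * (j + 4) * (j + 1) * c2 + 4 * (j + 8) * h3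
  have q2 : (((j + 4 : ℕ) : ℤ)^2 - 3 * ((j + 4 : ℕ) : ℤ)) / 2 = Q2 := by
    apply Int.ediv_eq_of_eq_mul_right (by norm_num)
    push_cast
    linear_combination -h2
  have q3 : (((j + 4 : ℕ) : ℤ)^3 - 3 * ((j + 4 : ℕ) : ℤ)^2 - 4 * ((j + 4 : ℕ) : ℤ) + 12) / 6
      = Q3 := by
    apply Int.ediv_eq_of_eq_mul_right (by norm_num)
    push_cast
    linear_combination -h3
  have q4 : (((j + 4 : ℕ) : ℤ)^4 - 2 * ((j + 4 : ℕ) : ℤ)^3 - 13 * ((j + 4 : ℕ) : ℤ)^2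
      + 38 * ((j + 4 : ℕ) : ℤ) - 24) / 24 = Q4 := by
    apply Int.ediv_eq_of_eq_mul_right (by norm_num)
    push_cast
    linear_combination -h4
  rw [q2, q3, q4, esymm_one, mul_assoc (C _), mul_assoc (C _), mul_assoc (C _), P4, P3, P2, P1,
    t0, P0]
  have k1 : (C (((j + 4 : ℕ) : ℤ) - 2) : MvPolynomial (Fin n) ℤ) = (j : MvPolynomial (Fin n) ℤ) + 2 := by
    have : (((j + 4 : ℕ) : ℤ) - 2) = ((j + 2 : ℕ) : ℤ) := by push_cast; ring
    rw [this, map_natCast]; push_cast; rfl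
  have k2 := congrArg (C : ℤ → MvPolynomial (Fin n) ℤ) hQ2
  have k3 := congrArg (C : ℤ → MvPolynomial (Fin n) ℤ) hQ3
  have k4 := congrArg (C : ℤ → MvPolynomial (Fin n) ℤ) hQ4
  simp only [hA2, hB2, hB3, hD2, hD3, hD4, map_add, map_sub, map_mul, map_neg, map_natCast,
    map_ofNat] at k2 k3 k4
  rw [k1, k4, k3, k2]
  ring
end

section
/- For every n ≥ 1 and every integer i ≥ 3, in ℤ[x₁,…,xₙ] one has m_{(3,2,2,1^{i−3})} = σ₁·σ₃·σᵢ − 4·σ₄·σᵢ + (3i−6)·σ₃·σ_{i+1} − (i−1)·σ₁·σ₂·σ_{i+1} − (i² − 4i)·σ₂·σ_{i+2} + ((i² − i − 2)/2)·σ₁²·σ_{i+2} − ((3i² − i − 10)/2)·σ₁·σ_{i+3} + ((i³ + i² − 10i + 8)/2)·σ_{i+4}. (All displayed rational coefficients are integers for integer i.) -/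
open MvPolynomial

section aux
variable {R : Type*} [CommRing R]

/-- Monomial symmetric function of type `3^a 2^b 1^j` of a list, by recursion. -/
def auxM : List R → ℤ → ℤ → ℤ → R
  | [], a, b, j => if a = 0 ∧ b = 0 ∧ j = 0 then 1 else 0
  | x :: l, a, b, j => auxM l a b j + x * auxM l a b (j - 1) + x ^ 2 * auxM l a (b - 1) j
      + x ^ 3 * auxM l (a - 1) b j

lemma auxM_neg (l : List R) : ∀ a b j : ℤ, (a < 0 ∨ b < 0 ∨ j < 0) → auxM l a b j = 0 := by
  induction l with
  | nil =>
    intro a b j h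
    rw [auxM, if_neg]
    omega
  | cons x l ih =>
    intro a b j h
    rw [auxM, ih a b j h, ih a b (j - 1) (by omega), ih a (b - 1) j (by omega),
      ih (a - 1) b j (by omega)]
    ring

lemma auxE_succ (x : R) (l : List R) (j : ℤ) :
    auxM (x :: l) 0 0 j = auxM l 0 0 j + x * auxM l 0 0 (j - 1) := by
  rw [auxM, auxM_neg l 0 (0 - 1) j (by omega), auxM_neg l (0 - 1) 0 j (by omega)]
  ring

lemma aux_zero (l : List R) : auxM l 0 0 0 = 1 := by
  induction l with
  | nil => simp [auxM]
  | cons x l ih => rw [auxE_succ, ih, auxM_neg l 0 0 (0 - 1) (by omega)]; ring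

lemma aux21_succ (x : R) (l : List R) (j : ℤ) :
    auxM (x :: l) 0 1 j = auxM l 0 1 j + x * auxM l 0 1 (j - 1) + x ^ 2 * auxM l 0 0 j := by
  rw [auxM, auxM_neg l (0 - 1) 1 j (by omega)]
  norm_num

lemma aux22_succ (x : R) (l : List R) (j : ℤ) :
    auxM (x :: l) 0 2 j = auxM l 0 2 j + x * auxM l 0 2 (j - 1) + x ^ 2 * auxM l 0 1 j := by
  rw [auxM, auxM_neg l (0 - 1) 2 j (by omega)]
  norm_num

lemma aux30_succ (x : R) (l : List R) (j : ℤ) :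
    auxM (x :: l) 1 0 j = auxM l 1 0 j + x * auxM l 1 0 (j - 1) + x ^ 3 * auxM l 0 0 j := by
  rw [auxM, auxM_neg l 1 (0 - 1) j (by omega)]
  norm_num

lemma aux32_succ (x : R) (l : List R) (j : ℤ) :
    auxM (x :: l) 1 1 j = auxM l 1 1 j + x * auxM l 1 1 (j - 1) + x ^ 2 * auxM l 1 0 j
      + x ^ 3 * auxM l 0 1 j := by
  rw [auxM]
  norm_num

lemma aux322_succ (x : R) (l : List R) (j : ℤ) :
    auxM (x :: l) 1 2 j = auxM l 1 2 j + x * auxM l 1 2 (j - 1) + x ^ 2 * auxM l 1 1 j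
      + x ^ 3 * auxM l 0 2 j := by
  rw [auxM]
  norm_num

lemma auxE_nil (j : ℤ) : auxM ([] : List R) 0 0 j = if j = 0 then 1 else 0 := by
  simp [auxM]

lemma aux21 (l : List R) : ∀ j : ℤ, auxM l 0 1 j =
    auxM l 0 0 1 * auxM l 0 0 (j + 1) - (j + 2) * auxM l 0 0 (j + 2) := by
  induction l with
  | nil =>
    intro j
    simp only [auxE_nil]
    simp [auxM]
    intro h
    obtain rfl : j = -2 := by omega
    norm_num
  | cons x l ih =>
    intro j
    simp only [auxE_succ, aux21_succ]
    have h0 := aux_zero l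
    linear_combination (norm := (push_cast; ring_nf)) ih j + x * ih (j - 1) +
      x * auxM l 0 0 (j + 1) * (- h0) + x ^ 2 * auxM l 0 0 j * (-h0)

lemma aux22 (l : List R) : ∀ j : ℤ, 2 * auxM l 0 2 j = 2 * auxM l 0 0 2 * auxM l 0 0 (j + 2) - 2 * (j + 2) * auxM l 0 0 1 * auxM l 0 0 (j + 3)
    + (j + 4) * (j + 1) * auxM l 0 0 (j + 4) := by
  induction l with
  | nil =>
    intro j
    simp only [auxE_nil]
    simp [auxM]
    try
      by_cases h : j + 4 = 0
      · obtain rfl : j = -4 := by omega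
        norm_num
      · simp [h]
  | cons x l ih =>
    intro j
    simp only [auxE_succ, aux22_succ]
    rw [show (1 : ℤ) - 1 = 0 by norm_num, aux_zero]
    try rw [show (2 : ℤ) - 1 = 1 by norm_num]
    try rw [show (3 : ℤ) - 1 = 2 by norm_num]
    try rw [show (4 : ℤ) - 1 = 3 by norm_num]
    linear_combination (norm := (push_cast; ring_nf)) ih j + x * ih (j - 1) + 2 * x ^ 2 * aux21 l j

lemma aux30 (l : List R) : ∀ j : ℤ, auxM l 1 0 j = auxM l 0 0 1 * (auxM l 0 0 1 * auxM l 0 0 (j + 1) - (j + 2) * auxM l 0 0 (j + 2))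
    - (2 * auxM l 0 0 2 * auxM l 0 0 (j + 1) - 2 * (j + 1) * auxM l 0 0 1 * auxM l 0 0 (j + 2) + (j + 3) * j * auxM l 0 0 (j + 3))
    - (j + 1) * (auxM l 0 0 1 * auxM l 0 0 (j + 2) - (j + 3) * auxM l 0 0 (j + 3)) := by
  induction l with
  | nil =>
    intro j
    simp only [auxE_nil]
    simp [auxM]
    try
      by_cases h : j + 3 = 0
      · obtain rfl : j = -3 := by omega
        norm_num
      · simp [h]
  | cons x l ih =>
    intro j
    simp only [auxE_succ, aux30_succ]
    rw [show (1 : ℤ) - 1 = 0 by norm_num, aux_zero]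
    try rw [show (2 : ℤ) - 1 = 1 by norm_num]
    try rw [show (3 : ℤ) - 1 = 2 by norm_num]
    try rw [show (4 : ℤ) - 1 = 3 by norm_num]
    linear_combination (norm := (push_cast; ring_nf)) ih j + x * ih (j - 1)

lemma aux32 (l : List R) : ∀ j : ℤ, 2 * auxM l 1 1 j =
    auxM l 0 0 1 * (2 * auxM l 0 0 2 * auxM l 0 0 (j + 2) - 2 * (j + 2) * auxM l 0 0 1 * auxM l 0 0 (j + 3)
      + (j + 4) * (j + 1) * auxM l 0 0 (j + 4))
    + 2 * (j + 1) * (2 * auxM l 0 0 2 * auxM l 0 0 (j + 3) - 2 * (j + 3) * auxM l 0 0 1 * auxM l 0 0 (j + 4)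
      + (j + 5) * (j + 2) * auxM l 0 0 (j + 5))
    - 6 * auxM l 0 0 3 * auxM l 0 0 (j + 2)
    + 3 * (j + 3) * (j + 2) * (auxM l 0 0 1 * auxM l 0 0 (j + 4) - (j + 5) * auxM l 0 0 (j + 5))
    + (j + 5) * (j + 4) * (j + 3) * auxM l 0 0 (j + 5) := by
  induction l with
  | nil =>
    intro j
    simp only [auxE_nil]
    simp [auxM]
    try
      by_cases h : j + 5 = 0
      · obtain rfl : j = -5 := by omega
        norm_num
      · simp [h]
  | cons x l ih =>
    intro j
    simp only [auxE_succ, aux32_succ]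
    rw [show (1 : ℤ) - 1 = 0 by norm_num, aux_zero]
    try rw [show (2 : ℤ) - 1 = 1 by norm_num]
    try rw [show (3 : ℤ) - 1 = 2 by norm_num]
    try rw [show (4 : ℤ) - 1 = 3 by norm_num]
    linear_combination (norm := (push_cast; ring_nf)) ih j + x * ih (j - 1) + 2 * x ^ 2 * aux30 l j + 2 * x ^ 3 * aux21 l j

lemma aux322 (l : List R) : ∀ j : ℤ, 2 * auxM l 1 2 j =
    2 * auxM l 0 0 1 * auxM l 0 0 3 * auxM l 0 0 (j + 3) - 8 * auxM l 0 0 4 * auxM l 0 0 (j + 3)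
    + 2 * (3 * (j + 3) - 6) * auxM l 0 0 3 * auxM l 0 0 (j + 4)
    - 2 * ((j + 3) - 1) * auxM l 0 0 1 * auxM l 0 0 2 * auxM l 0 0 (j + 4)
    - 2 * ((j + 3) ^ 2 - 4 * (j + 3)) * auxM l 0 0 2 * auxM l 0 0 (j + 5)
    + ((j + 3) ^ 2 - (j + 3) - 2) * auxM l 0 0 1 ^ 2 * auxM l 0 0 (j + 5)
    - (3 * (j + 3) ^ 2 - (j + 3) - 10) * auxM l 0 0 1 * auxM l 0 0 (j + 6)
    + ((j + 3) ^ 3 + (j + 3) ^ 2 - 10 * (j + 3) + 8) * auxM l 0 0 (j + 7) := by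
  induction l with
  | nil =>
    intro j
    simp only [auxE_nil]
    simp [auxM]
    try
      by_cases h : j + 7 = 0
      · obtain rfl : j = -7 := by omega
        norm_num
      · simp [h]
  | cons x l ih =>
    intro j
    simp only [auxE_succ, aux322_succ]
    rw [show (1 : ℤ) - 1 = 0 by norm_num, aux_zero]
    try rw [show (2 : ℤ) - 1 = 1 by norm_num]
    try rw [show (3 : ℤ) - 1 = 2 by norm_num]
    try rw [show (4 : ℤ) - 1 = 3 by norm_num]
    linear_combination (norm := (push_cast; ring_nf)) ih j + x * ih (j - 1) + x ^ 2 * aux32 l j + x ^ 3 * aux22 l j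


lemma aux_esymm (l : List R) : ∀ k : ℕ, (l : Multiset R).esymm k = auxM l 0 0 k := by
  induction l with
  | nil =>
    intro k
    cases k with
    | zero => simp [auxM, Multiset.esymm]
    | succ k =>
      rw [auxM, if_neg (by omega)]
      rw [Multiset.esymm, Multiset.powersetCard_eq_empty _ (by simp)]
      simp
  | cons x l ih =>
    intro k
    rw [auxE_succ]
    cases k with
    | zero =>
      rw [← ih, auxM_neg _ _ _ _ (by simp)]
      simp [Multiset.esymm]
    | succ k =>
      rw [← ih, show ((k + 1 : ℕ) : ℤ) - 1 = k by push_cast; ring, ← ih, ← Multiset.cons_coe]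
      simp only [Multiset.esymm, Multiset.powersetCard_cons, Multiset.map_add, Multiset.sum_add,
        Multiset.map_map, Function.comp_def, Multiset.prod_cons, Multiset.sum_map_mul_left]

/-- The monomial symmetric sum with exponents bounded by `N`. -/
def auxS (N n : ℕ) (lam : Multiset ℕ) (x : Fin n → R) : R :=
  ∑ f : Fin n → Fin N,
    if Multiset.map (fun i => (f i : ℕ)) (Finset.univ.filter fun i => (f i : ℕ) ≠ 0).val = lam
    then ∏ i, x i ^ (f i : ℕ) else 0

lemma map_filter_succ (N n : ℕ) (g : Fin (n + 1) → Fin N) :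
    Multiset.map (fun i => (g i : ℕ)) (Finset.univ.filter fun i => (g i : ℕ) ≠ 0).val
    = (if (g 0 : ℕ) = 0 then 0 else {(g 0 : ℕ)}) +
      Multiset.map (fun i : Fin n => (g i.succ : ℕ))
        (Finset.univ.filter fun i : Fin n => (g i.succ : ℕ) ≠ 0).val := by
  rw [Fin.univ_succ, Finset.filter_cons]
  by_cases hv : (g 0 : ℕ) = 0
  · simp [hv, Finset.filter_map, Function.comp_def]
  · simp [hv, Finset.filter_map, Function.comp_def]

lemma auxS_succ (N n : ℕ) (lam : Multiset ℕ) (x : Fin (n + 1) → R) :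
    auxS N (n + 1) lam x = ∑ v ∈ Finset.range N, x 0 ^ v *
      (if v = 0 then auxS N n lam (fun i => x i.succ) else
        if v ∈ lam then auxS N n (lam.erase v) (fun i => x i.succ) else 0) := by
  rw [Finset.sum_range, auxS]
  simp only [map_filter_succ, Fin.prod_univ_succ]
  rw [← (Fin.consEquiv (fun _ => Fin N)).sum_comp,
    Fintype.sum_prod_type]
  refine Finset.sum_congr rfl fun v _ => ?_
  simp only [Fin.consEquiv, Equiv.coe_fn_mk, Fin.cons_zero,
    Fin.cons_succ]
  by_cases hv : (v : ℕ) = 0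
  · simp [hv, auxS]
  · simp only [hv, if_false, Multiset.singleton_add]
    by_cases hm : (v : ℕ) ∈ lam
    · obtain ⟨mu, rfl⟩ := Multiset.exists_cons_of_mem hm
      simp [auxS, Finset.mul_sum]
    · rw [if_neg hm, mul_zero]
      refine Finset.sum_eq_zero fun f _ => if_neg ?_
      rintro rfl
      simp at hm

/-- The multiset `3^a 2^b 1^j`. -/
def auxL (a b j : ℕ) : Multiset ℕ :=
  Multiset.replicate a 3 + (Multiset.replicate b 2 + Multiset.replicate j 1)

lemma mem_auxL (a b j v : ℕ) : v ∈ auxL a b j ↔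
    (a ≠ 0 ∧ v = 3) ∨ (b ≠ 0 ∧ v = 2) ∨ (j ≠ 0 ∧ v = 1) := by
  simp [auxL, Multiset.mem_replicate]

lemma erase3 (a b j : ℕ) : (auxL (a + 1) b j).erase 3 = auxL a b j := by
  simp [auxL, Multiset.replicate_succ]

lemma erase2 (a b j : ℕ) : (auxL a (b + 1) j).erase 2 = auxL a b j := by
  rw [show auxL a (b + 1) j = 2 ::ₘ auxL a b j by simp [auxL, Multiset.replicate_succ]]
  simp

lemma erase1 (a b j : ℕ) : (auxL a b (j + 1)).erase 1 = auxL a b j := by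
  rw [show auxL a b (j + 1) = 1 ::ₘ auxL a b j by simp [auxL, Multiset.replicate_succ]]
  simp

lemma auxS_eq (N : ℕ) (hN : 4 ≤ N) (n : ℕ) : ∀ (a b j : ℕ) (x : Fin n → R),
    auxS N n (auxL a b j) x = auxM (List.ofFn x) a b j := by
  induction n with
  | zero =>
    intro a b j x
    have : (0 = auxL a b j) ↔ (a = 0 ∧ b = 0 ∧ j = 0) := by
      rw [eq_comm, ← Multiset.card_eq_zero]
      simp [auxL]
    simp [auxS, auxM, this]
  | succ n ih =>
    intro a b j x
    rw [auxS_succ, List.ofFn_succ, auxM,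
      ← Finset.sum_subset (Finset.range_subset_range.2 hN)]
    · simp only [Finset.sum_range_succ, Finset.sum_range_zero, mem_auxL]
      have h1 : (if j ≠ 0 then auxS N n ((auxL a b j).erase 1) (fun i => x i.succ) else 0)
          = auxM (List.ofFn fun i => x i.succ) a b (j - 1) := by
        cases j with
        | zero => rw [auxM_neg _ _ _ _ (by simp)]; simp
        | succ j => rw [erase1, ih]; simp
      have h2 : (if b ≠ 0 then auxS N n ((auxL a b j).erase 2) (fun i => x i.succ) else 0)
          = auxM (List.ofFn fun i => x i.succ) a (b - 1) j := by
        cases b with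
        | zero => rw [auxM_neg _ _ _ _ (by simp)]; simp
        | succ j => rw [erase2, ih]; simp
      have h3 : (if a ≠ 0 then auxS N n ((auxL a b j).erase 3) (fun i => x i.succ) else 0)
          = auxM (List.ofFn fun i => x i.succ) (a - 1) b j := by
        cases a with
        | zero => rw [auxM_neg _ _ _ _ (by simp)]; simp
        | succ j => rw [erase3, ih]; simp
      rw [← h1, ← h2, ← h3, ← ih]
      simp
    · intro v _ hv
      simp only [Finset.mem_range] at hv
      rw [if_neg (by omega), if_neg, mul_zero]
      rw [mem_auxL]
      omega

end aux

theorem stmt_16 (n : ℕ) (hn : 1 ≤ n) (i : ℕ) (hi : 3 ≤ i) :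
    mSym n (3 ::ₘ 2 ::ₘ 2 ::ₘ Multiset.replicate (i - 3) 1)
      = esymm (Fin n) ℤ 1 * esymm (Fin n) ℤ 3 * esymm (Fin n) ℤ (i) - C ((4 : ℤ)) * esymm (Fin n) ℤ 4 * esymm (Fin n) ℤ (i)
        + C ((3 * (i : ℤ) - 6 : ℤ)) * esymm (Fin n) ℤ 3 * esymm (Fin n) ℤ (i + 1)
        - C (((i : ℤ) - 1 : ℤ)) * esymm (Fin n) ℤ 1 * esymm (Fin n) ℤ 2 * esymm (Fin n) ℤ (i + 1)
        - C (((i : ℤ)^2 - 4 * (i : ℤ) : ℤ)) * esymm (Fin n) ℤ 2 * esymm (Fin n) ℤ (i + 2)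
        + C ((((i : ℤ)^2 - (i : ℤ) - 2) / 2 : ℤ)) * esymm (Fin n) ℤ 1^2 * esymm (Fin n) ℤ (i + 2)
        - C (((3 * (i : ℤ)^2 - (i : ℤ) - 10) / 2 : ℤ)) * esymm (Fin n) ℤ 1 * esymm (Fin n) ℤ (i + 3)
        + C ((((i : ℤ)^3 + (i : ℤ)^2 - 10 * (i : ℤ) + 8) / 2 : ℤ)) * esymm (Fin n) ℤ (i + 4) := by
  obtain ⟨j, rfl⟩ : ∃ j, i = j + 3 := ⟨i - 3, by omega⟩
  have hE : ∀ k : ℕ, esymm (Fin n) ℤ k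
      = auxM (List.ofFn (X : Fin n → MvPolynomial (Fin n) ℤ)) 0 0 k := by
    intro k
    rw [esymm_eq_multiset_esymm, Fin.univ_val_map, aux_esymm]
  have hM : mSym n (3 ::ₘ 2 ::ₘ 2 ::ₘ Multiset.replicate (j + 3 - 3) 1)
      = auxM (List.ofFn (X : Fin n → MvPolynomial (Fin n) ℤ)) 1 2 j := by
    have h := auxS_eq ((auxL 1 2 j).sum + 1) (by simp [auxL]; omega) n 1 2 j
      (X : Fin n → MvPolynomial (Fin n) ℤ)
    have h2 : 3 ::ₘ 2 ::ₘ 2 ::ₘ Multiset.replicate (j + 3 - 3) 1 = auxL 1 2 j := by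
      simp only [auxL, Multiset.replicate_succ, Multiset.replicate_zero, Multiset.cons_add,
        zero_add, Nat.add_sub_cancel]
    rw [h2]
    exact h
  have key := aux322 (List.ofFn (X : Fin n → MvPolynomial (Fin n) ℤ)) j
  rw [hM]
  simp only [hE]
  have d1 : (2 : ℤ) ∣ ((j + 3 : ℕ) : ℤ) ^ 2 - ((j + 3 : ℕ) : ℤ) - 2 := by
    obtain ⟨c, h⟩ := Int.even_mul_succ_self ((j : ℤ) + 2)
    exact ⟨c - 1, by push_cast; linear_combination h⟩
  have d2 : (2 : ℤ) ∣ 3 * ((j + 3 : ℕ) : ℤ) ^ 2 - ((j + 3 : ℕ) : ℤ) - 10 := by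
    obtain ⟨c, h⟩ := d1
    exact ⟨c + ((j + 3 : ℕ) : ℤ) ^ 2 - 4, by linear_combination h⟩
  have d3 : (2 : ℤ) ∣ ((j + 3 : ℕ) : ℤ) ^ 3 + ((j + 3 : ℕ) : ℤ) ^ 2 - 10 * ((j + 3 : ℕ) : ℤ) + 8 := by
    obtain ⟨c, h⟩ := d1
    exact ⟨((j + 3 : ℕ) : ℤ) * c + ((j + 3 : ℕ) : ℤ) ^ 2 - 4 * ((j + 3 : ℕ) : ℤ) + 4,
      by linear_combination ((j + 3 : ℕ) : ℤ) * h⟩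
  obtain ⟨c1, h1⟩ := d1
  obtain ⟨c2, h2⟩ := d2
  obtain ⟨c3, h3⟩ := d3
  rw [h1, h2, h3]
  simp only [Int.mul_ediv_cancel_left _ (two_ne_zero : (2 : ℤ) ≠ 0)]
  have q1 := congrArg (Int.cast : ℤ → MvPolynomial (Fin n) ℤ) h1
  have q2 := congrArg (Int.cast : ℤ → MvPolynomial (Fin n) ℤ) h2
  have q3 := congrArg (Int.cast : ℤ → MvPolynomial (Fin n) ℤ) h3
  have hC : ∀ z : ℤ, (C z : MvPolynomial (Fin n) ℤ) = (z : MvPolynomial (Fin n) ℤ) :=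
    fun z => (eq_intCast C z)
  simp only [hC]
  push_cast at q1 q2 q3 key ⊢
  simp only [add_assoc] at key ⊢
  norm_num only at key ⊢
  generalize List.ofFn (X : Fin n → MvPolynomial (Fin n) ℤ) = l at *
  apply mul_left_cancel₀ (two_ne_zero : (2 : MvPolynomial (Fin n) ℤ) ≠ 0)
  linear_combination key + auxM l 0 0 1 ^ 2 * auxM l 0 0 (j + 5) * q1
    - auxM l 0 0 1 * auxM l 0 0 (j + 6) * q2 + auxM l 0 0 (j + 7) * q3
end

section
/- For every n ≥ 1 and every integer i ≥ 2, in ℤ[x₁,…,xₙ] one has m_{(3,3,1^{i−2})} = σ₂²·σᵢ − 2·σ₁·σ₃·σᵢ + 2·σ₄·σᵢ − σ₁·σ₂·σ_{i+1} + 3·σ₃·σ_{i+1} − (2i+1)·σ₂·σ_{i+2} + (i+1)·σ₁²·σ_{i+2} − (i+1)·σ₁·σ_{i+3} + ((i² + 3i − 4)/2)·σ_{i+4}. (The coefficient (i² + 3i − 4)/2 = (i+4)(i−1)/2 is an integer.) -/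
open MvPolynomial

/-- The partition `(3^a, 1^b)`. -/
def lamP (a b : ℕ) : Multiset ℕ := Multiset.replicate a 3 + Multiset.replicate b 1

/-- Multiset of the nonzero values of `f`. -/
def Mpos {n : ℕ} (f : Fin n → ℕ) : Multiset ℕ :=
  ((Finset.univ : Finset (Fin n)).val.map f).filter (fun a => a ≠ 0)

noncomputable def GG {R : Type*} [CommRing R] (N n : ℕ) (x : Fin n → R) (l : Multiset ℕ) : R :=
  ∑ f : Fin n → Fin (N + 1),
    if Mpos (fun i => (f i : ℕ)) = l then ∏ i, x i ^ (f i : ℕ) else 0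

noncomputable def LL {R : Type*} [CommRing R] (N n : ℕ) (x : Fin n → R) (a b : ℕ) : R :=
  ∑ f : Fin n → Fin (N + 1),
    if Mpos (fun i => (f i : ℕ)) = lamP a b then ∏ i, x i ^ (f i : ℕ) else 0

noncomputable def AA {R : Type*} [CommRing R] (N n : ℕ) (x : Fin n → R) : ℕ → R
  | 0 => 0
  | 1 => 0
  | (k + 2) => LL N n x 2 k

noncomputable def BB {R : Type*} [CommRing R] (N n : ℕ) (x : Fin n → R) : ℕ → R
  | 0 => 0
  | (k + 1) => LL N n x 1 k

noncomputable def EE {R : Type*} [CommRing R] (n : ℕ) (x : Fin n → R) (k : ℕ) : R :=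
  ((Finset.univ : Finset (Fin n)).val.map x).esymm k

theorem univ_map_cons {α : Type*} {n : ℕ} (f : Fin (n + 1) → α) :
    (Finset.univ : Finset (Fin (n + 1))).val.map f
      = f 0 ::ₘ (Finset.univ : Finset (Fin n)).val.map (fun i => f i.succ) := by
  rw [Fin.univ_val_map, Fin.univ_val_map, List.ofFn_succ]
  rfl

theorem EE_zero {R : Type*} [CommRing R] (n : ℕ) (x : Fin n → R) : EE n x 0 = 1 := by
  simp [EE, Multiset.esymm]

theorem EE_nil {R : Type*} [CommRing R] (x : Fin 0 → R) (k : ℕ) : EE 0 x (k + 1) = 0 := by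
  simp [EE, Multiset.esymm, Multiset.powersetCard_zero_right]

theorem EE_succ {R : Type*} [CommRing R] (n : ℕ) (x : Fin (n + 1) → R) (k : ℕ) :
    EE (n + 1) x (k + 1) = EE n (fun i => x i.succ) (k + 1)
      + x 0 * EE n (fun i => x i.succ) k := by
  unfold EE
  rw [univ_map_cons]
  simp only [Multiset.esymm, Multiset.powersetCard_cons, Multiset.map_map, Multiset.map_add,
    Multiset.sum_add, Function.comp_def, Multiset.prod_cons, Multiset.sum_map_mul_left]

theorem GG_succ {R : Type*} [CommRing R] (N n : ℕ) (x : Fin (n + 1) → R) (l : Multiset ℕ)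
    (hl : 0 ∉ l) :
    GG N (n + 1) x l = ∑ a ∈ Finset.range (N + 1),
      if a = 0 then GG N n (fun i => x i.succ) l else
      if a ∈ l then x 0 ^ a * GG N n (fun i => x i.succ) (l.erase a) else 0 := by
  rw [← Fin.sum_univ_eq_sum_range (fun a => if a = 0 then GG N n (fun i => x i.succ) l else
      if a ∈ l then x 0 ^ a * GG N n (fun i => x i.succ) (l.erase a) else 0)]
  unfold GG
  rw [← (Fin.consEquiv (fun _ => Fin (N + 1))).sum_comp, Fintype.sum_prod_type]
  refine Finset.sum_congr rfl fun a _ => ?_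
  have hM : ∀ f : Fin n → Fin (N + 1),
      Mpos (fun i => ((Fin.consEquiv (fun _ => Fin (N + 1)) (a, f)) i : ℕ))
        = if (a : ℕ) = 0 then Mpos (fun i => (f i : ℕ)) else
          (a : ℕ) ::ₘ Mpos (fun i => (f i : ℕ)) := by
    intro f
    unfold Mpos
    rw [univ_map_cons]
    split_ifs with h <;> simp [Fin.consEquiv, h]
  simp only [hM, Fin.prod_univ_succ]
  simp only [Fin.consEquiv, Equiv.coe_fn_mk, Fin.cons_zero, Fin.cons_succ]
  split_ifs with h h2
  · simp [h]
  · rw [Finset.mul_sum]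
    refine Finset.sum_congr rfl fun f _ => ?_
    have : ((a : ℕ) ::ₘ Mpos (fun i => (f i : ℕ)) = l)
        ↔ (Mpos (fun i => (f i : ℕ)) = l.erase a) := by
      constructor
      · rintro rfl
        simp
      · intro h3
        rw [h3, Multiset.cons_erase h2]
    simp only [this, mul_ite, mul_zero]
  · refine Finset.sum_eq_zero fun f _ => ?_
    rw [if_neg]
    rintro rfl
    simp at h2

theorem LL_succ {R : Type*} [CommRing R] (N n : ℕ) (hN : 3 ≤ N) (x : Fin (n + 1) → R) (a b : ℕ) :
    LL N (n + 1) x a b = LL N n (fun i => x i.succ) a b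
      + (if b = 0 then 0 else x 0 * LL N n (fun i => x i.succ) a (b - 1))
      + (if a = 0 then 0 else x 0 ^ 3 * LL N n (fun i => x i.succ) (a - 1) b) := by
  have hLG : ∀ n (x : Fin n → R) a b, LL N n x a b = GG N n x (lamP a b) := fun _ _ _ _ => rfl
  simp only [hLG]
  rw [GG_succ]
  swap
  · simp [lamP, Multiset.mem_replicate]
  rw [← Finset.sum_subset (s₁ := {0, 1, 3})]
  · rw [Finset.sum_insert (by simp), Finset.sum_insert (by simp), Finset.sum_singleton]
    have h1 : (1 ∈ lamP a b) ↔ b ≠ 0 := by simp [lamP, Multiset.mem_replicate]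
    have h3 : (3 ∈ lamP a b) ↔ a ≠ 0 := by simp [lamP, Multiset.mem_replicate]
    have e1 : b ≠ 0 → (lamP a b).erase 1 = lamP a (b - 1) := by
      intro hb
      obtain ⟨c, rfl⟩ := Nat.exists_eq_succ_of_ne_zero hb
      simp [lamP, Multiset.replicate_succ]
    have e3 : a ≠ 0 → (lamP a b).erase 3 = lamP (a - 1) b := by
      intro hb
      obtain ⟨c, rfl⟩ := Nat.exists_eq_succ_of_ne_zero hb
      simp [lamP, Multiset.replicate_succ]
    simp only [h1, h3, if_true, one_ne_zero, if_false, pow_one, OfNat.ofNat_ne_zero, ite_not]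
    rw [add_assoc]
    congr 2
    · split_ifs with h
      · rfl
      · rw [e1 h]
    · split_ifs with h
      · rfl
      · rw [e3 h]
  · intro c hc
    simp at hc ⊢
    omega
  · intro c _ hc
    simp at hc
    rw [if_neg hc.1, if_neg]
    simp [lamP, Multiset.mem_replicate]
    omega

theorem LL_nil {R : Type*} [CommRing R] (N : ℕ) (x : Fin 0 → R) (a b : ℕ) :
    LL N 0 x a b = if a = 0 ∧ b = 0 then 1 else 0 := by
  have : ((0 : Multiset ℕ) = lamP a b) ↔ (a = 0 ∧ b = 0) := by
    rw [← Multiset.card_eq_zero.trans eq_comm]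
    simp [lamP]
  simp [LL, Mpos, this]

theorem AA_succ {R : Type*} [CommRing R] (N n : ℕ) (hN : 3 ≤ N) (x : Fin (n + 1) → R) (k : ℕ) :
    AA N (n + 1) x (k + 1) = AA N n (fun i => x i.succ) (k + 1)
      + x 0 * AA N n (fun i => x i.succ) k + x 0 ^ 3 * BB N n (fun i => x i.succ) k := by
  rcases k with _ | _ | k <;> simp [AA, BB, LL_succ N n hN]

theorem BB_succ {R : Type*} [CommRing R] (N n : ℕ) (hN : 3 ≤ N) (x : Fin (n + 1) → R) (k : ℕ) :
    BB N (n + 1) x (k + 1) = BB N n (fun i => x i.succ) (k + 1)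
      + x 0 * BB N n (fun i => x i.succ) k + x 0 ^ 3 * LL N n (fun i => x i.succ) 0 k := by
  rcases k with _ | k <;> simp [BB, LL_succ N n hN]

theorem LL_all' {R : Type*} [CommRing R] (N : ℕ) (hN : 3 ≤ N) (n : ℕ) (x : Fin n → R) :
    (∀ i, LL N n x 0 i = EE n x i) ∧
    (∀ i, BB N n x i = (EE n x 1 ^ 2 - 2 * EE n x 2) * EE n x i - EE n x 1 * EE n x (i + 1)
      + ((i : R) + 2) * EE n x (i + 2)) ∧
    (∀ i : ℕ, AA N n x i = EE n x 2 ^ 2 * EE n x i - 2 * EE n x 1 * EE n x 3 * EE n x i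
      + 2 * EE n x 4 * EE n x i - EE n x 1 * EE n x 2 * EE n x (i + 1)
      + 3 * EE n x 3 * EE n x (i + 1) - (2 * (i : R) + 1) * EE n x 2 * EE n x (i + 2)
      + ((i : R) + 1) * EE n x 1 ^ 2 * EE n x (i + 2) - ((i : R) + 1) * EE n x 1 * EE n x (i + 3)
      + (((i + 2).choose 2 : R) - 3) * EE n x (i + 4)) := by
  induction n with
  | zero =>
    have e1 := EE_nil x 0
    have e2 := EE_nil x 1
    have e3 := EE_nil x 2
    have e4 := EE_nil x 3
    simp only [zero_add, Nat.reduceAdd] at e1 e2 e3 e4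
    refine ⟨?_, ?_, ?_⟩
    · rintro (_ | i)
      · simp [LL_nil, EE_zero]
      · simp [LL_nil, EE_nil]
    · rintro (_ | i)
      · simp [BB, e1, e2]
      · simp [BB, LL_nil, EE_nil, e1, e2]
    · rintro (_ | _ | i) <;> simp [AA, LL_nil, EE_nil, e1, e2, e3, e4]
  | succ n ih =>
    obtain ⟨h0, h1, h2⟩ := ih (fun i => x i.succ)
    have e1 := EE_succ n x 0
    have e2 := EE_succ n x 1
    have e3 := EE_succ n x 2
    have e4 := EE_succ n x 3
    have ez := EE_zero n (fun i => x i.succ)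
    simp only [zero_add, Nat.reduceAdd] at e1 e2 e3 e4
    refine ⟨?_, ?_, ?_⟩
    · rintro (_ | i)
      · rw [LL_succ N n hN]
        simp [h0, EE_zero]
      · rw [LL_succ N n hN]
        simp [h0, EE_succ]
    · rintro (_ | i)
      · simp only [BB, EE_zero, zero_add]
        push_cast
        ring
      · rw [BB_succ N n hN, h0, h1, h1]
        simp only [EE_succ n x, e1, e2, ez, Nat.add_right_comm i 1]
        push_cast
        ring
    · rintro (_ | i)
      · simp only [AA, EE_zero, zero_add]
        simp
        ring
      · have hc : (((i + 1 + 2).choose 2 : ℕ) : R) = ((i + 2).choose 2 : ℕ) + (i + 2) := by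
          rw [show i + 1 + 2 = (i + 2) + 1 by ring, Nat.choose_succ_succ' (i + 2) 1,
            Nat.choose_one_right]
          push_cast
          ring
        rw [AA_succ N n hN, h1, h2, h2, hc]
        simp only [EE_succ n x, e1, e2, e3, e4, ez, Nat.add_right_comm i 1]
        push_cast
        ring

theorem stmt_17 (n : ℕ) (hn : 1 ≤ n) (i : ℕ) (hi : 2 ≤ i) :
    mSym n (3 ::ₘ 3 ::ₘ Multiset.replicate (i - 2) 1)
      = esymm (Fin n) ℤ 2^2 * esymm (Fin n) ℤ (i) - C ((2 : ℤ)) * esymm (Fin n) ℤ 1 * esymm (Fin n) ℤ 3 * esymm (Fin n) ℤ (i) + C ((2 : ℤ)) * esymm (Fin n) ℤ 4 * esymm (Fin n) ℤ (i)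
        - esymm (Fin n) ℤ 1 * esymm (Fin n) ℤ 2 * esymm (Fin n) ℤ (i + 1) + C ((3 : ℤ)) * esymm (Fin n) ℤ 3 * esymm (Fin n) ℤ (i + 1)
        - C ((2 * (i : ℤ) + 1 : ℤ)) * esymm (Fin n) ℤ 2 * esymm (Fin n) ℤ (i + 2)
        + C (((i : ℤ) + 1 : ℤ)) * esymm (Fin n) ℤ 1^2 * esymm (Fin n) ℤ (i + 2)
        - C (((i : ℤ) + 1 : ℤ)) * esymm (Fin n) ℤ 1 * esymm (Fin n) ℤ (i + 3)
        + C ((((i : ℤ)^2 + 3 * (i : ℤ) - 4) / 2 : ℤ)) * esymm (Fin n) ℤ (i + 4) := by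
  have key := (LL_all' (R := MvPolynomial (Fin n) ℤ)
    ((3 ::ₘ 3 ::ₘ Multiset.replicate (i - 2) 1).sum) (by simp) n X).2.2 i
  obtain ⟨k, rfl⟩ : ∃ k, i = k + 2 := ⟨i - 2, by omega⟩
  have hdiv : (((k + 2 : ℕ) : ℤ)^2 + 3 * ((k + 2 : ℕ) : ℤ) - 4) / 2
      = ((k + 2 + 2).choose 2 : ℤ) - 3 := by
    have h1 := Nat.triangle_succ (k + 3)
    have h2 : (k + 2 + 2).choose 2 * 2 = (k + 4) * (k + 3) := by
      rw [Nat.choose_two_right]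
      exact Nat.div_two_mul_two_of_even (Nat.even_mul_pred_self _)
    have h3 : ((k + 2 + 2).choose 2 : ℤ) * 2 = (k + 4) * (k + 3) := by exact_mod_cast h2
    apply Int.ediv_eq_of_eq_mul_left (by norm_num)
    push_cast
    linarith
  rw [hdiv]
  have hm : mSym n (3 ::ₘ 3 ::ₘ Multiset.replicate (k + 2 - 2) 1)
      = AA ((3 ::ₘ 3 ::ₘ Multiset.replicate (k + 2 - 2) 1).sum) n
        (X : Fin n → MvPolynomial (Fin n) ℤ) (k + 2) := by
    have hl : (3 ::ₘ 3 ::ₘ Multiset.replicate (k + 2 - 2) 1) = lamP 2 k := by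
      simp [lamP, Multiset.replicate_succ]
    rw [hl]
    simp only [mSym, AA, LL, Mpos, Multiset.filter_map, Finset.filter_val]
    rfl
  rw [hm, key]
  simp only [EE, ← esymm_eq_multiset_esymm]
  simp only [map_sub, map_add, map_mul, map_natCast, map_ofNat, map_one]
end

section
/- For every n ≥ 1 and every integer i ≥ 1, in ℤ[x₁,…,xₙ] one has m_{(5,1^{i−1})} = σ₁⁴·σᵢ − 4·σ₁²·σ₂·σᵢ + 4·σ₁·σ₃·σᵢ + 2·σ₂²·σᵢ − 4·σ₄·σᵢ − σ₁³·σ_{i+1} + 3·σ₁·σ₂·σ_{i+1} − 3·σ₃·σ_{i+1} + σ₁²·σ_{i+2} − 2·σ₂·σ_{i+2} − σ₁·σ_{i+3} + (i+4)·σ_{i+4}. -/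
open MvPolynomial

/-- elementary symmetric polynomial on a subset -/
noncomputable def eOn (n : ℕ) (s : Finset (Fin n)) (j : ℕ) : MvPolynomial (Fin n) ℤ :=
  ∑ t ∈ s.powersetCard j, ∏ k ∈ t, X k

noncomputable def FF (n a j : ℕ) : MvPolynomial (Fin n) ℤ :=
  ∑ l : Fin n, X l ^ a * eOn n (Finset.univ.erase l) j

lemma eOn_split (n : ℕ) (l : Fin n) (j : ℕ) :
    esymm (Fin n) ℤ (j + 1) =
      eOn n (Finset.univ.erase l) (j + 1) + X l * eOn n (Finset.univ.erase l) j := by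
  have h : (Finset.univ : Finset (Fin n)) = insert l (Finset.univ.erase l) := by simp
  unfold esymm eOn
  conv_lhs => rw [h]
  rw [Finset.powersetCard_succ_insert (by simp), Finset.sum_union, Finset.sum_image,
    Finset.mul_sum]
  · congr 1
    apply Finset.sum_congr rfl
    intro t ht
    rw [Finset.prod_insert]
    intro hl
    have := (Finset.mem_powersetCard.1 ht).1 hl
    simp at this
  · intro s hs t ht hst
    have h1 : l ∉ s := fun hl => by
      have := (Finset.mem_powersetCard.1 hs).1 hl
      simp at this
    have h2 : l ∉ t := fun hl => by
      have := (Finset.mem_powersetCard.1 ht).1 hl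
      simp at this
    rw [← Finset.erase_insert h1, ← Finset.erase_insert h2]
    exact congrArg (fun u => Finset.erase u l) hst
  · rw [Finset.disjoint_left]
    intro t ht ht'
    obtain ⟨u, -, rfl⟩ := Finset.mem_image.1 ht'
    have := (Finset.mem_powersetCard.1 ht).1 (Finset.mem_insert_self l u)
    simp at this

lemma FF_rec (n a j : ℕ) :
    psum (Fin n) ℤ a * esymm (Fin n) ℤ (j + 1) = FF n a (j + 1) + FF n (a + 1) j := by
  unfold psum FF
  rw [Finset.sum_mul, ← Finset.sum_add_distrib]
  apply Finset.sum_congr rfl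
  intro l _
  rw [eOn_split n l j]
  ring

lemma FF_one (n j : ℕ) : FF n 1 j = ((j : MvPolynomial (Fin n) ℤ) + 1) * esymm (Fin n) ℤ (j + 1) := by
  have h : ∀ l : Fin n, X l ^ 1 * eOn n (Finset.univ.erase l) j =
      ∑ t ∈ Finset.univ.powersetCard (j + 1), if l ∈ t then ∏ k ∈ t, (X k : MvPolynomial (Fin n) ℤ) else 0 := by
    intro l
    have h1 := eOn_split n l j
    have h2 : eOn n (Finset.univ.erase l) (j + 1) =
      ∑ t ∈ Finset.univ.powersetCard (j + 1), if l ∈ t then 0 else ∏ k ∈ t, (X k : MvPolynomial (Fin n) ℤ) := by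
      unfold eOn
      simp_rw [← ite_not (l ∈ _)]
      rw [← Finset.sum_filter]
      congr 1
      ext t
      simp only [Finset.mem_powersetCard, Finset.mem_filter, Finset.subset_univ, true_and,
        Finset.subset_erase]
      tauto
    have h3 : esymm (Fin n) ℤ (j + 1) = (∑ t ∈ Finset.univ.powersetCard (j + 1), if l ∈ t then 0 else ∏ k ∈ t, (X k : MvPolynomial (Fin n) ℤ)) + ∑ t ∈ Finset.univ.powersetCard (j + 1), if l ∈ t then ∏ k ∈ t, (X k : MvPolynomial (Fin n) ℤ) else 0 := by
      rw [← Finset.sum_add_distrib]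
      unfold esymm
      apply Finset.sum_congr rfl
      intro t _
      split_ifs <;> simp
    rw [h3, h2] at h1
    rw [pow_one]
    exact (add_left_cancel h1).symm
  unfold FF
  simp_rw [h]
  rw [Finset.sum_comm]
  unfold esymm
  rw [Finset.mul_sum]
  apply Finset.sum_congr rfl
  intro t ht
  rw [← Finset.sum_filter, Finset.sum_const, nsmul_eq_mul]
  simp [(Finset.mem_powersetCard.1 ht).2]

lemma newton_ps (n : ℕ) :
    psum (Fin n) ℤ 1 = esymm (Fin n) ℤ 1 ∧
    psum (Fin n) ℤ 2 = esymm (Fin n) ℤ 1 ^ 2 - 2 * esymm (Fin n) ℤ 2 ∧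
    psum (Fin n) ℤ 3 = esymm (Fin n) ℤ 1 ^ 3 - 3 * esymm (Fin n) ℤ 1 * esymm (Fin n) ℤ 2
      + 3 * esymm (Fin n) ℤ 3 ∧
    psum (Fin n) ℤ 4 = esymm (Fin n) ℤ 1 ^ 4 - 4 * esymm (Fin n) ℤ 1 ^ 2 * esymm (Fin n) ℤ 2
      + 4 * esymm (Fin n) ℤ 1 * esymm (Fin n) ℤ 3 + 2 * esymm (Fin n) ℤ 2 ^ 2
      - 4 * esymm (Fin n) ℤ 4 := by
  have h1 : psum (Fin n) ℤ 1 = esymm (Fin n) ℤ 1 := by rw [psum_one, esymm_one]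
  have e1 := FF_rec n 1 0
  have e2 := FF_rec n 2 0
  have e3 := FF_rec n 3 0
  have f1 := FF_rec n 1 1
  have f2 := FF_rec n 2 1
  have g1 := FF_rec n 1 2
  have z : ∀ a, FF n a 0 = psum (Fin n) ℤ a := by
    intro a
    simp [FF, psum, eOn]
  simp only [z, FF_one, h1] at e1 e2 e3 f1 f2 g1
  norm_num only [Nat.cast_zero, Nat.cast_one, Nat.cast_ofNat, Nat.reduceAdd, zero_add]
    at e1 e2 e3 f1 f2 g1
  have h2 : psum (Fin n) ℤ 2 = esymm (Fin n) ℤ 1 ^ 2 - 2 * esymm (Fin n) ℤ 2 := by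
    linear_combination -e1
  rw [h2] at e2 f2
  have h3 : psum (Fin n) ℤ 3 = esymm (Fin n) ℤ 1 ^ 3 - 3 * esymm (Fin n) ℤ 1 * esymm (Fin n) ℤ 2
      + 3 * esymm (Fin n) ℤ 3 := by
    linear_combination -e2 + f1
  rw [h3] at e3
  refine ⟨h1, h2, h3, ?_⟩
  linear_combination -e3 + f2 - g1

lemma mSym_eq_FF (n j : ℕ) : mSym n (5 ::ₘ Multiset.replicate j 1) = FF n 5 j := by
  unfold mSym FF eOn
  simp_rw [Finset.mul_sum]
  rw [← Finset.sum_filter, Finset.sum_sigma']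
  symm
  have hs : (5 ::ₘ Multiset.replicate j 1).sum + 1 = j + 6 := by simp; ring
  let g : (Σ _ : Fin n, Finset (Fin n)) → Fin n → ℕ := fun p k =>
    if k = p.1 then 5 else if k ∈ p.2 then 1 else 0
  have hg : ∀ p k, g p k < (5 ::ₘ Multiset.replicate j 1).sum + 1 := by
    intro p k
    rw [hs]
    simp only [g]
    split_ifs <;> omega
  refine Finset.sum_bij (fun p _ k => (⟨g p k, hg p k⟩ : Fin _)) ?_ ?_ ?_ ?_
  · rintro ⟨l, t⟩ hp
    simp only [Finset.mem_sigma, Finset.mem_univ, true_and, Finset.mem_powersetCard,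
      Finset.subset_erase, Finset.subset_univ] at hp
    obtain ⟨hl, ht⟩ := hp
    simp only [Finset.mem_filter, Finset.mem_univ, true_and]
    have : (Finset.univ.filter fun i => g ⟨l, t⟩ i ≠ 0) = Finset.cons l t hl := by
      ext k
      simp only [g, Finset.mem_filter, Finset.mem_univ, true_and, Finset.mem_cons]
      split_ifs <;> simp_all
    rw [this, Finset.cons_val, Multiset.map_cons]
    congr 1
    · simp [g]
    · rw [Multiset.eq_replicate]
      refine ⟨by simpa using ht, ?_⟩
      intro b hb
      obtain ⟨k, hk, rfl⟩ := Multiset.mem_map.1 hb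
      have hk' : k ∈ t := hk
      have : k ≠ l := fun h => hl (h ▸ hk')
      simp [g, this, hk']
  · rintro ⟨l, t⟩ hp ⟨l', t'⟩ hp' h
    simp only [Finset.mem_sigma, Finset.mem_univ, true_and, Finset.mem_powersetCard,
      Finset.subset_erase, Finset.subset_univ] at hp hp'
    have h' : ∀ k, g ⟨l, t⟩ k = g ⟨l', t'⟩ k := fun k => congrArg Fin.val (congrFun h k)
    have hll : l = l' := by
      have := h' l
      simp only [g] at this
      by_contra hne
      simp only [if_true, if_neg hne] at this
      split_ifs at this <;> omega
    subst hll
    have : t = t' := by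
      ext k
      have := h' k
      simp only [g] at this
      by_cases hk : k = l
      · subst hk; tauto
      · simp only [if_neg hk] at this
        split_ifs at this <;> tauto
    rw [this]
  · intro f hf
    simp only [Finset.mem_filter, Finset.mem_univ, true_and] at hf
    have h5 : 5 ∈ Multiset.map (fun i => (f i : ℕ)) (Finset.univ.filter fun i => (f i : ℕ) ≠ 0).val := by
      rw [hf]; simp
    obtain ⟨l, hl, hl5⟩ := Multiset.mem_map.1 h5
    have hl' : l ∈ Finset.univ.filter fun i => (f i : ℕ) ≠ 0 := hl
    obtain ⟨S, hS⟩ : ∃ S, S = Finset.univ.filter fun i => (f i : ℕ) ≠ 0 := ⟨_, rfl⟩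
    rw [← hS] at hf hl'
    have hc : S.val = l ::ₘ (S.erase l).val := by
      rw [Finset.erase_val, Multiset.cons_erase hl']
    rw [hc, Multiset.map_cons, hl5, Multiset.cons_inj_right, Multiset.eq_replicate] at hf
    obtain ⟨hcard, hone⟩ := hf
    refine ⟨⟨l, S.erase l⟩, ?_, ?_⟩
    · simp only [Finset.mem_sigma, Finset.mem_univ, true_and, Finset.mem_powersetCard]
      refine ⟨Finset.erase_subset_erase _ (Finset.subset_univ _), ?_⟩
      rw [Multiset.card_map] at hcard
      exact hcard
    · funext k
      apply Fin.ext
      simp only [g]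
      by_cases hk : k = l
      · subst hk; simp [hl5]
      · rw [if_neg hk]
        by_cases hkS : k ∈ S
        · have : k ∈ S.erase l := Finset.mem_erase.2 ⟨hk, hkS⟩
          rw [if_pos this]
          exact (hone _ (Multiset.mem_map.2 ⟨k, this, rfl⟩)).symm
        · rw [if_neg (fun h => hkS (Finset.mem_of_mem_erase h))]
          by_contra h0
          apply hkS
          rw [hS]
          simp only [Finset.mem_filter, Finset.mem_univ, true_and]
          exact fun h => h0 h.symm
  · rintro ⟨l, t⟩ hp
    simp only [Finset.mem_sigma, Finset.mem_univ, true_and, Finset.mem_powersetCard,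
      Finset.subset_erase, Finset.subset_univ] at hp
    obtain ⟨hl, ht⟩ := hp
    have h1 : ∏ k, (X k : MvPolynomial (Fin n) ℤ) ^ g ⟨l, t⟩ k
        = ∏ k ∈ insert l t, (X k : MvPolynomial (Fin n) ℤ) ^ g ⟨l, t⟩ k := by
      symm
      apply Finset.prod_subset (Finset.subset_univ _)
      intro k _ hk
      simp only [Finset.mem_insert, not_or] at hk
      simp [g, hk.1, hk.2]
    show _ = ∏ k, (X k : MvPolynomial (Fin n) ℤ) ^ g ⟨l, t⟩ k
    rw [h1, Finset.prod_insert hl]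
    congr 1
    · simp [g]
    · apply Finset.prod_congr rfl
      intro k hk
      have : k ≠ l := fun h => hl (h ▸ hk)
      simp [g, this, hk]

theorem stmt_19 (n : ℕ) (hn : 1 ≤ n) (i : ℕ) (hi : 1 ≤ i) :
    mSym n (5 ::ₘ Multiset.replicate (i - 1) 1)
      = esymm (Fin n) ℤ 1^4 * esymm (Fin n) ℤ (i) - C ((4 : ℤ)) * esymm (Fin n) ℤ 1^2 * esymm (Fin n) ℤ 2 * esymm (Fin n) ℤ (i)
        + C ((4 : ℤ)) * esymm (Fin n) ℤ 1 * esymm (Fin n) ℤ 3 * esymm (Fin n) ℤ (i) + C ((2 : ℤ)) * esymm (Fin n) ℤ 2^2 * esymm (Fin n) ℤ (i)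
        - C ((4 : ℤ)) * esymm (Fin n) ℤ 4 * esymm (Fin n) ℤ (i)
        - esymm (Fin n) ℤ 1^3 * esymm (Fin n) ℤ (i + 1) + C ((3 : ℤ)) * esymm (Fin n) ℤ 1 * esymm (Fin n) ℤ 2 * esymm (Fin n) ℤ (i + 1)
        - C ((3 : ℤ)) * esymm (Fin n) ℤ 3 * esymm (Fin n) ℤ (i + 1)
        + esymm (Fin n) ℤ 1^2 * esymm (Fin n) ℤ (i + 2) - C ((2 : ℤ)) * esymm (Fin n) ℤ 2 * esymm (Fin n) ℤ (i + 2)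
        - esymm (Fin n) ℤ 1 * esymm (Fin n) ℤ (i + 3)
        + C (((i : ℤ) + 4 : ℤ)) * esymm (Fin n) ℤ (i + 4) := by
  obtain ⟨j, rfl⟩ : ∃ j, i = j + 1 := ⟨i - 1, by omega⟩
  rw [Nat.add_sub_cancel, mSym_eq_FF]
  obtain ⟨p1, p2, p3, p4⟩ := newton_ps n
  have r4 := FF_rec n 4 j
  have r3 := FF_rec n 3 (j + 1)
  have r2 := FF_rec n 2 (j + 2)
  have r1 := FF_rec n 1 (j + 3)
  rw [p4] at r4
  rw [p3] at r3
  rw [p2] at r2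
  rw [p1, FF_one] at r1
  have c : (C (((j + 1 : ℕ) : ℤ) + 4) : MvPolynomial (Fin n) ℤ) = (j : MvPolynomial (Fin n) ℤ) + 5 := by
    simp only [map_add, map_natCast, Nat.cast_add, Nat.cast_one, map_one, map_ofNat]
    ring
  rw [c]
  simp only [map_ofNat]
  norm_num only [add_assoc, Nat.reduceAdd, Nat.cast_add, Nat.cast_ofNat] at r4 r3 r2 r1 ⊢
  linear_combination -r4 + r3 - r2 + r1
end
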